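/- Fix any iteration t ≤ T+1 and let ρ_max^{S_U} := max over k ∈ S_U, q ≠ s(X_k), r ∈ [m] of ρ_{k,q,r}^{(t)}. On the event E, under Condition (H), every learnable noise coefficient satisfies ρ_{i,j,r}^{(t)} ≤ σ_0/(σ_n√d) + (p_un N σ_n² √d / (100·(log T)^{2/3}))·(ρ_max^{S_U})² for all i ∈ S_L, j ≠ s(X_i), r ∈ [m]. Consequently, the noise-stability bound (NS) holds at iteration t: |⟨w_r^{(t)}, x_{i,j}⟩| ≤ 3σ_0σ_n√(d·log(16NmP/δ)) + (21 p_un N P (log T)^{1/3}/√d)·√(log(16N²P²/δ)) for all i ∈ S_L, j ≠ s(X_i), r ∈ [m]. -/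

import Mathlib

open Finset MeasureTheory ProbabilityTheory
open scoped ENNReal NNReal

noncomputable section

namespace AD

/-- Cubic ReLU activation. -/
def phi (z : ℝ) : ℝ := (max 0 z) ^ 3

/-- Negative sigmoid `ψ(z) = 1/(1+e^z)`. -/
def psi (z : ℝ) : ℝ := 1 / (1 + Real.exp z)

/-- Logistic loss `ℓ(z) = log(1+e^{-z})`. -/
def lloss (z : ℝ) : ℝ := Real.log (1 + Real.exp (-z))

/-- Logistic sigmoid `σ(z) = 1/(1+e^{-z})`. -/
def sigm (z : ℝ) : ℝ := 1 / (1 + Real.exp (-z))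

/-- Euclidean inner product on `Fin d → ℝ`. -/
def dot {d : ℕ} (a b : Fin d → ℝ) : ℝ := ∑ k, a k * b k

/-- Squared Euclidean norm. -/
def sqnorm {d : ℕ} (a : Fin d → ℝ) : ℝ := dot a a

/-- First standard basis vector `e₁` (the learnable feature `u`). -/
def e1 (d : ℕ) (hd : 0 < d) : Fin d → ℝ := fun k => if k = (⟨0, hd⟩ : Fin d) then 1 else 0

/-- Last standard basis vector `e_d` (the unlearnable feature `v`). -/
def eLast (d : ℕ) (_hd : 0 < d) : Fin d → ℝ := fun k => if (k : ℕ) = d - 1 then 1 else 0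

/-- The two-layer student network
`f_W(X) = ∑_r ∑_p [φ(⟨w_r,x_p⟩) − φ(−⟨w_r,x_p⟩)]`. -/
def netOut {m P d : ℕ} (w : Fin m → Fin d → ℝ) (X : Fin P → Fin d → ℝ) : ℝ :=
  ∑ r, ∑ p, (phi (dot (w r) (X p)) - phi (-(dot (w r) (X p))))

/-- The concentration event `E` of the paper, i.e. properties (P1)–(P8), stated for
training patches `x`, initialization `w0`, labels `y` and signal-patch indices `sig`. -/
def EventEOn (N m P d : ℕ) (hd : 0 < d) (sigman sigma0 delta : ℝ)
    (y : Fin N → ℝ) (sig : Fin N → Fin P)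
    (x : Fin N → Fin P → Fin d → ℝ) (w0 : Fin m → Fin d → ℝ) : Prop :=
  -- (P1) noise-patch norms
  (∀ i j, j ≠ sig i →
      sigman ^ 2 * d / 2 ≤ sqnorm (x i j) ∧ sqnorm (x i j) ≤ 3 * sigman ^ 2 * d / 2) ∧
  -- (P2) pairwise noise inner products
  (∀ i k j q, j ≠ sig i → q ≠ sig k → ((i, j) : Fin N × Fin P) ≠ (k, q) →
      |dot (x i j) (x k q)| ≤
        2 * sigman ^ 2 * Real.sqrt ((d : ℝ) * Real.log ((16 : ℝ) * N ^ 2 * P ^ 2 / delta))) ∧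
  -- (P3) sup-norm of noise patches
  (∀ i j, j ≠ sig i → ∀ kk : Fin d,
      |x i j kk| ≤ sigman * Real.sqrt (2 * Real.log ((16 : ℝ) * d * N * P / delta))) ∧
  -- (P4) initialization norms
  (∀ r, Real.sqrt (sqnorm (w0 r)) ≤ 2 * sigma0 * Real.sqrt d) ∧
  -- (P5) initialization signal correlation
  (∀ r, |dot (w0 r) (e1 d hd)| ≤ sigma0 * Real.sqrt (2 * Real.log ((16 : ℝ) * m / delta))) ∧
  -- (P6) initialization noise correlations
  (∀ r i j, j ≠ sig i →
      |dot (w0 r) (x i j)| ≤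
        2 * sigma0 * sigman * Real.sqrt ((d : ℝ) * Real.log ((16 : ℝ) * N * m * P / delta))) ∧
  -- (P7) maximal initial signal alignment
  (∃ r, sigma0 / 2 ≤ dot (w0 r) (e1 d hd)) ∧
  -- (P8) maximal initial noise alignment
  (∀ i j, j ≠ sig i → ∃ r, sigma0 * sigman * Real.sqrt d / 4 ≤ y i * dot (w0 r) (x i j))
structure Setting where
  N : ℕ
  m : ℕ
  P : ℕ
  d : ℕ
  T : ℕ
  hN : 0 < N
  hm : 0 < m
  hP : 0 < P
  hd : 0 < d
  alpha : ℝ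
  sigman : ℝ
  sigma0 : ℝ
  eta : ℝ
  eps : ℝ
  delta : ℝ
  halpha : 0 < alpha
  hsigman : 0 < sigman
  hsigma0 : 0 < sigma0
  heta : 0 < eta
  heps : 0 < eps
  hepsalpha : eps < alpha
  hdelta0 : 0 < delta
  hdelta1 : delta < 1
  /-- labels -/
  y : Fin N → ℝ
  hy : ∀ i, y i = 1 ∨ y i = -1
  /-- signal patch index -/
  sig : Fin N → Fin P
  /-- learnable samples -/
  SL : Finset (Fin N)
  /-- unlearnable samples -/
  SU : Finset (Fin N)
  hunion : SL ∪ SU = Finset.univ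
  hdisj : Disjoint SL SU
  /-- training patches -/
  x : Fin N → Fin P → Fin d → ℝ
  hsigL : ∀ i ∈ SL, x i (sig i) = (alpha * y i) • e1 d hd
  hsigU : ∀ i ∈ SU, x i (sig i) = (alpha * y i) • eLast d hd
  hnoiseU : ∀ i j, j ≠ sig i → dot (x i j) (e1 d hd) = 0
  hnoiseV : ∀ i j, j ≠ sig i → dot (x i j) (eLast d hd) = 0
  /-- weight trajectory -/
  w : ℕ → Fin m → Fin d → ℝ
  hwperp : ∀ t r, dot (w t r) (eLast d hd) = 0
  /-- adversarial training examples at each iteration -/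
  xadv : ℕ → Fin N → Fin P → Fin d → ℝ
  hadvnoise : ∀ t i j, j ≠ sig i → xadv t i j = x i j
  hadvspan : ∀ t i, ∃ c : ℝ, xadv t i (sig i) - x i (sig i) = c • x i (sig i)
  hadvlinf : ∀ t i p k, |xadv t i p k - x i p k| ≤ eps
  hadvlearn : ∀ t : ℕ, ∀ i ∈ SL,
    alpha - eps ≤ y i * dot (xadv t i (sig i)) (e1 d hd) ∧
      y i * dot (xadv t i (sig i)) (e1 d hd) ≤ alpha

namespace Setting

variable (S : Setting)

/-- Adversarial margin `y_i f_{W^{(t)}}(X̃_i^{(t)})`. -/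
def marg (t : ℕ) (i : Fin S.N) : ℝ := S.y i * netOut (S.w t) (S.xadv t i)

/-- Signal coordinate `w_{r,1}^{(t)}`. -/
def wsig (t : ℕ) (r : Fin S.m) : ℝ := S.w t r ⟨0, S.hd⟩

/-- Unlearnable fraction `p_un = |S_U|/N`. -/
def pun : ℝ := (S.SU.card : ℝ) / S.N

/-- The adversarial-training gradient-descent dynamics. -/
def ATDyn : Prop :=
  ∀ t r, S.w (t + 1) r = S.w t r +
    (3 * S.eta / S.N) •
      ∑ i : Fin S.N, (psi (S.marg t i) * S.y i) •
        ∑ p : Fin S.P, (dot (S.w t r) (S.xadv t i p)) ^ 2 • S.xadv t i p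

/-- The signed gradient weight of sample `i` at iteration `t` under adversarial
distillation from teacher logits `fT`. -/
def gAD (fT : Fin S.N → ℝ) (t : ℕ) (i : Fin S.N) : ℝ :=
  sigm (S.y i * fT i) * psi (S.marg t i) - sigm (-(S.y i * fT i)) * psi (-(S.marg t i))

/-- The adversarial-distillation gradient-descent dynamics. -/
def ADDyn (fT : Fin S.N → ℝ) : Prop :=
  ∀ t r, S.w (t + 1) r = S.w t r +
    (3 * S.eta / S.N) •
      ∑ i : Fin S.N, (S.gAD fT t i * S.y i) •
        ∑ p : Fin S.P, (dot (S.w t r) (S.xadv t i p)) ^ 2 • S.xadv t i p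

/-- Noise coefficients `ρ_{i,j,r}^{(t)}` (adversarial training). -/
def rho (i : Fin S.N) (j : Fin S.P) (r : Fin S.m) : ℕ → ℝ
  | 0 => 0
  | t + 1 => rho i j r t + (3 * S.eta / S.N) * psi (S.marg t i) * (dot (S.w t r) (S.x i j)) ^ 2

/-- Noise coefficients under adversarial distillation. -/
def rhoAD (fT : Fin S.N → ℝ) (i : Fin S.N) (j : Fin S.P) (r : Fin S.m) : ℕ → ℝ
  | 0 => 0
  | t + 1 => rhoAD fT i j r t + (3 * S.eta / S.N) * S.gAD fT t i * (dot (S.w t r) (S.x i j)) ^ 2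

/-- The event `E` for a setting. -/
def EventE : Prop :=
  EventEOn S.N S.m S.P S.d S.hd S.sigman S.sigma0 S.delta S.y S.sig S.x (S.w 0)

/-- Condition (H): the parameter requirements of Condition 4.1 of the paper
(without the unlearnable-fraction regime item, which is imposed separately). -/
def CondH (C : ℝ) : Prop :=
  1 ≤ C ∧
  -- training horizon
  C * S.N / (S.eta * S.sigma0 * S.sigman ^ 3 * ((S.d : ℝ) * Real.sqrt S.d)) ≤ (S.T : ℝ) ∧
  -- dimension
  C * S.m ^ 2 * S.P ^ 2 * S.N ^ 2 *
      (Real.log ((S.T : ℝ) * S.N * S.m * S.P / S.delta)) ^ 4 ≤ (S.d : ℝ) ∧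
  -- signal strength
  C * S.sigman * Real.sqrt S.d * Real.log ((S.T : ℝ) * S.N * S.m * S.P / S.delta) /
      (((S.N : ℝ) * (1 - S.pun)) ^ ((1 : ℝ) / 3)) ≤ S.alpha ∧
  -- initialization scale
  S.sigma0 ≤
    C⁻¹ *
        min (min (1 / ((S.m : ℝ) ^ ((2 : ℝ) / 3) * (S.P : ℝ) ^ ((2 : ℝ) / 3) *
            S.sigman * Real.sqrt S.d))
          (1 / (S.alpha * (S.m : ℝ) ^ ((2 : ℝ) / 3))))
          (1 / (S.sigman * S.m ^ 2 * Real.sqrt S.P * S.d)) /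
      Real.log ((S.T : ℝ) * S.d * S.N * S.m * S.P / S.delta) ∧
  -- learning rate
  S.eta ≤
    C⁻¹ * min (min (1 / (S.alpha ^ 3 * S.sigma0)) (1 / (S.sigman ^ 2 * S.d))) (1 / S.alpha ^ 2) /
      Real.log ((S.T : ℝ) * S.N * S.m * S.P / S.delta) ∧
  -- adversarial budget
  C * S.sigman * S.m * Real.sqrt S.P * Real.log ((S.T : ℝ) * S.d * S.N * S.P / S.delta) ≤ S.eps ∧
  S.eps < C⁻¹ * min S.alpha (1 / (S.m * S.sigma0 * S.d)) ∧
  -- width and number of patches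
  C * Real.log ((S.N : ℝ) * S.P / S.delta) ≤ (S.m : ℝ) ∧
  (S.m : ℝ) ≤ C * Real.log S.d ^ C ∧
  2 ≤ S.P ∧ (S.P : ℝ) ≤ C

/-- The sparse-unlearnable regime of Condition 4.1. -/
def SparseRegime (C : ℝ) : Prop :=
  C / S.N ≤ S.pun ∧ S.pun ≤ C⁻¹ * Real.log S.d / S.N ∧
  C * S.m * S.P * Real.log ((S.T : ℝ) * S.d * S.N * S.m * S.P / S.delta) ≤ (S.N : ℝ)

/-- The noise-stability bound (NS) on learnable samples at iteration `t`. -/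
def NS (t : ℕ) : Prop :=
  ∀ r : Fin S.m, ∀ i ∈ S.SL, ∀ j, j ≠ S.sig i →
    |dot (S.w t r) (S.x i j)| ≤
      3 * S.sigma0 * S.sigman *
          Real.sqrt ((S.d : ℝ) * Real.log ((16 : ℝ) * S.N * S.m * S.P / S.delta)) +
        21 * S.pun * S.N * S.P * Real.log S.T ^ ((1 : ℝ) / 3) / Real.sqrt S.d *
          Real.sqrt (Real.log ((16 : ℝ) * S.N ^ 2 * S.P ^ 2 / S.delta))

/-- The signal-learning hitting time `T₀`. -/
def T0 (C0 : ℝ) : ℕ :=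
  sInf {t : ℕ | ∃ r, C0 / (S.alpha * (S.m : ℝ) ^ ((1 : ℝ) / 3)) < S.wsig t r}

/-- Maximum of the noise coefficients over unlearnable noise patches. -/
def rhoMaxSU (t : ℕ) : ℝ :=
  sSup {z : ℝ | ∃ r : Fin S.m, ∃ k ∈ S.SU, ∃ q, q ≠ S.sig k ∧ z = S.rho k q r t}

/-- Shifted noise coefficients `ρ̂_{i,j,r}^{(t)}`. -/
def rhoHat (i : Fin S.N) (j : Fin S.P) (r : Fin S.m) (t : ℕ) : ℝ :=
  S.rho i j r t + S.y i * dot (S.w 0 r) (S.x i j) / sqnorm (S.x i j)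

/-- Maximum shifted noise coefficient over unlearnable noise patches. -/
def rhoHatMax (t : ℕ) : ℝ :=
  sSup {z : ℝ | ∃ r : Fin S.m, ∃ k ∈ S.SU, ∃ q, q ≠ S.sig k ∧ z = S.rhoHat k q r t}

/-- The noise-memorization hitting time `T₁`. -/
def T1 (C1 : ℝ) : ℕ :=
  sInf {t : ℕ | C1 / (((S.m : ℝ) * S.P) ^ ((1 : ℝ) / 3) * S.sigman ^ 2 * S.d) < S.rhoHatMax t}

/-- The Good-Teacher horizon `T_max`. -/
def Tmax : ℝ :=
  S.N / (1000 * S.eta * S.m * S.P * S.sigma0 ^ 4 * S.sigman ^ 6 * (S.d : ℝ) ^ 3 *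
    Real.log ((16 : ℝ) * S.N * S.m * S.P / S.delta) ^ 2)

end Setting

theorem phi_sub_phi_neg (z : ℝ) : phi z - phi (-z) = z ^ 3 := by
  unfold phi
  rcases le_total 0 z with h | h
  · rw [max_eq_right h, max_eq_left (by linarith)]; ring
  · rw [max_eq_left h, max_eq_right (by linarith)]; ring

theorem psi_pos (z : ℝ) : 0 < psi z := by unfold psi; positivity

theorem psi_le_one (z : ℝ) : psi z ≤ 1 := by
  unfold psi
  rw [div_le_one (by positivity)]
  linarith [Real.exp_pos z]

theorem psi_le_exp_neg (z : ℝ) : psi z ≤ Real.exp (-z) := by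
  unfold psi
  rw [Real.exp_neg, ← one_div]
  exact one_div_le_one_div_of_le (Real.exp_pos z) (by linarith)

theorem dot_comm {d : ℕ} (a b : Fin d → ℝ) : dot a b = dot b a := dotProduct_comm a b

theorem dot_add_left {d : ℕ} (a b c : Fin d → ℝ) : dot (a + b) c = dot a c + dot b c :=
  add_dotProduct a b c

theorem dot_smul_left {d : ℕ} (c : ℝ) (a b : Fin d → ℝ) : dot (c • a) b = c * dot a b :=
  smul_dotProduct c a b

theorem dot_smul_right {d : ℕ} (c : ℝ) (a b : Fin d → ℝ) : dot a (c • b) = c * dot a b :=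
  dotProduct_smul c a b

theorem dot_sum_left {d : ℕ} {ι : Type*} (s : Finset ι) (f : ι → Fin d → ℝ) (c : Fin d → ℝ) :
    dot (∑ k ∈ s, f k) c = ∑ k ∈ s, dot (f k) c :=
  sum_dotProduct s f c

theorem dot_e1 {d : ℕ} (hd : 0 < d) (a : Fin d → ℝ) : dot a (e1 d hd) = a ⟨0, hd⟩ := by
  simp [dot, e1]

theorem dot_e1_e1 {d : ℕ} (hd : 0 < d) : dot (e1 d hd) (e1 d hd) = 1 := by
  simp [dot_e1, e1]

namespace Setting

variable (S : Setting)

theorem mem_SL_or_mem_SU (i : Fin S.N) : i ∈ S.SL ∨ i ∈ S.SU := by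
  have h : i ∈ S.SL ∪ S.SU := by rw [S.hunion]; exact mem_univ i
  exact mem_union.mp h

theorem y_mul_self (i : Fin S.N) : S.y i * S.y i = 1 := by
  rcases S.hy i with h | h <;> rw [h] <;> norm_num

theorem abs_y (i : Fin S.N) : |S.y i| = 1 := by
  rcases S.hy i with h | h <;> rw [h] <;> norm_num

theorem xadv_sig_learnable (t : ℕ) {i : Fin S.N} (hi : i ∈ S.SL) :
    S.xadv t i (S.sig i) = dot (S.xadv t i (S.sig i)) (e1 S.d S.hd) • e1 S.d S.hd := by
  obtain ⟨c, hc⟩ := S.hadvspan t i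
  have h : S.xadv t i (S.sig i) = ((1 + c) * (S.alpha * S.y i)) • e1 S.d S.hd := by
    rw [sub_eq_iff_eq_add.mp hc, S.hsigL i hi, smul_smul, ← add_smul]
    congr 1; ring
  rw [h, dot_smul_left, dot_e1_e1, mul_one]

theorem xadv_sig_unlearnable (t : ℕ) {i : Fin S.N} (hi : i ∈ S.SU) :
    ∃ c : ℝ, S.xadv t i (S.sig i) = c • eLast S.d S.hd := by
  obtain ⟨c, hc⟩ := S.hadvspan t i
  refine ⟨(1 + c) * (S.alpha * S.y i), ?_⟩
  rw [sub_eq_iff_eq_add.mp hc, S.hsigU i hi, smul_smul, ← add_smul]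
  congr 1; ring

/-- Perturbed signal patches are orthogonal to noise patches. -/
theorem dot_xadv_sig_noise (t : ℕ) (k i : Fin S.N) {j : Fin S.P} (hj : j ≠ S.sig i) :
    dot (S.xadv t k (S.sig k)) (S.x i j) = 0 := by
  rcases S.mem_SL_or_mem_SU k with hk | hk
  · rw [S.xadv_sig_learnable t hk, dot_smul_left, dot_comm (e1 S.d S.hd), S.hnoiseU i j hj,
      mul_zero]
  · obtain ⟨c, hc⟩ := S.xadv_sig_unlearnable t hk
    rw [hc, dot_smul_left, dot_comm, S.hnoiseV i j hj, mul_zero]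

theorem dot_w_xadv_sig_unlearnable (t : ℕ) (r : Fin S.m) {i : Fin S.N} (hi : i ∈ S.SU) :
    dot (S.w t r) (S.xadv t i (S.sig i)) = 0 := by
  obtain ⟨c, hc⟩ := S.xadv_sig_unlearnable t hi
  rw [hc, dot_smul_right, S.hwperp, mul_zero]

/-- The signed strength `y_i ⟨x̃_i, u⟩` of the perturbed signal patch. -/
def strength (t : ℕ) (i : Fin S.N) : ℝ := S.y i * dot (S.xadv t i (S.sig i)) (e1 S.d S.hd)

theorem y_mul_dot_w_xadv_sig (t : ℕ) (r : Fin S.m) {i : Fin S.N} (hi : i ∈ S.SL) :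
    S.y i * dot (S.w t r) (S.xadv t i (S.sig i)) = S.wsig t r * S.strength t i := by
  rw [S.xadv_sig_learnable t hi, dot_smul_right, dot_e1 _ (S.w t r)]
  unfold strength wsig
  ring

theorem marg_eq (t : ℕ) (i : Fin S.N) :
    S.marg t i = ∑ r, (S.y i * dot (S.w t r) (S.xadv t i (S.sig i))) ^ 3 +
      ∑ r, ∑ p ∈ univ.erase (S.sig i), (S.y i * dot (S.w t r) (S.x i p)) ^ 3 := by
  have hy3 : ∀ z : ℝ, S.y i * z ^ 3 = (S.y i * z) ^ 3 := fun z => by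
    rcases S.hy i with h | h <;> rw [h] <;> ring
  unfold marg netOut
  rw [mul_sum, ← sum_add_distrib]
  refine sum_congr rfl fun r _ => ?_
  rw [mul_sum, ← add_sum_erase _ _ (mem_univ (S.sig i))]
  congr 1
  · rw [phi_sub_phi_neg, hy3]
  · refine sum_congr rfl fun p hp => ?_
    rw [phi_sub_phi_neg, hy3, S.hadvnoise t i p (ne_of_mem_erase hp)]

theorem marg_eq_learnable (t : ℕ) {i : Fin S.N} (hi : i ∈ S.SL) :
    S.marg t i = ∑ r, (S.wsig t r * S.strength t i) ^ 3 +
      ∑ r, ∑ p ∈ univ.erase (S.sig i), (S.y i * dot (S.w t r) (S.x i p)) ^ 3 := by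
  rw [S.marg_eq]
  simp only [S.y_mul_dot_w_xadv_sig t _ hi]

theorem marg_eq_unlearnable (t : ℕ) {i : Fin S.N} (hi : i ∈ S.SU) :
    S.marg t i =
      ∑ r, ∑ p ∈ univ.erase (S.sig i), (S.y i * dot (S.w t r) (S.x i p)) ^ 3 := by
  rw [S.marg_eq]
  simp [S.dot_w_xadv_sig_unlearnable t _ hi]

theorem dot_w_noise_eq (hdyn : S.ATDyn) (r : Fin S.m) (i : Fin S.N) {j : Fin S.P}
    (hj : j ≠ S.sig i) (t : ℕ) :
    dot (S.w t r) (S.x i j) = dot (S.w 0 r) (S.x i j) +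
      ∑ k, ∑ q ∈ univ.erase (S.sig k), S.y k * S.rho k q r t * dot (S.x k q) (S.x i j) := by
  induction t with
  | zero => simp [rho]
  | succ t ih =>
    rw [hdyn t r, dot_add_left, dot_smul_left, dot_sum_left, ih, add_assoc, mul_sum,
      ← sum_add_distrib]
    congr 1
    refine sum_congr rfl fun k _ => ?_
    rw [dot_smul_left, dot_sum_left, ← add_sum_erase _ _ (mem_univ (S.sig k)),
      dot_smul_left, S.dot_xadv_sig_noise t k i hj, mul_zero, zero_add, mul_sum, mul_sum,
      ← sum_add_distrib]
    refine sum_congr rfl fun q hq => ?_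
    rw [dot_smul_left, S.hadvnoise t k q (ne_of_mem_erase hq)]
    simp only [rho]
    ring

theorem wsig_succ (hdyn : S.ATDyn) (t : ℕ) (r : Fin S.m) :
    S.wsig (t + 1) r = S.wsig t r + (3 * S.eta / S.N) *
      ∑ i ∈ S.SL, psi (S.marg t i) * (S.wsig t r ^ 2 * S.strength t i ^ 3) := by
  have hsum : ∀ i : Fin S.N,
      dot ((psi (S.marg t i) * S.y i) •
        ∑ p : Fin S.P, (dot (S.w t r) (S.xadv t i p)) ^ 2 • S.xadv t i p) (e1 S.d S.hd) =
      if i ∈ S.SL then psi (S.marg t i) * (S.wsig t r ^ 2 * S.strength t i ^ 3) else 0 := by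
    intro i
    have hnoise : ∑ p ∈ univ.erase (S.sig i),
        dot ((dot (S.w t r) (S.xadv t i p)) ^ 2 • S.xadv t i p) (e1 S.d S.hd) = 0 := by
      refine sum_eq_zero fun p hp => ?_
      rw [dot_smul_left, S.hadvnoise t i p (ne_of_mem_erase hp),
        S.hnoiseU i p (ne_of_mem_erase hp), mul_zero]
    rw [dot_smul_left, dot_sum_left, ← add_sum_erase _ _ (mem_univ (S.sig i)), hnoise, add_zero,
      dot_smul_left]
    split_ifs with hi
    · have h1 := S.y_mul_dot_w_xadv_sig t r hi
      have hy := S.y_mul_self i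
      have h2 : dot (S.w t r) (S.xadv t i (S.sig i)) =
          S.y i * (S.wsig t r * S.strength t i) := by
        rw [← h1, ← mul_assoc, hy, one_mul]
      rw [h2, show dot (S.xadv t i (S.sig i)) (e1 S.d S.hd) = S.y i * S.strength t i by
        unfold strength; rw [← mul_assoc, hy, one_mul]]
      calc _ = psi (S.marg t i) * (S.wsig t r ^ 2 * S.strength t i ^ 3) *
            ((S.y i * S.y i) * (S.y i * S.y i)) := by ring
        _ = _ := by rw [hy]; ring
    · rw [S.dot_w_xadv_sig_unlearnable t r ((S.mem_SL_or_mem_SU i).resolve_left hi)]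
      ring
  have h := congrArg (fun a => dot a (e1 S.d S.hd)) (hdyn t r)
  simp only [dot_add_left, dot_smul_left, dot_sum_left] at h
  simp only [dot_smul_left, dot_sum_left] at hsum
  rw [dot_e1, dot_e1] at h
  unfold wsig at *
  rw [h]
  congr 2
  rw [sum_congr rfl fun i _ => hsum i]
  simp

theorem step_pos : 0 < 3 * S.eta / S.N := by
  have := S.heta
  have : (0 : ℝ) < S.N := by exact_mod_cast S.hN
  positivity

theorem rho_succ (i : Fin S.N) (j : Fin S.P) (r : Fin S.m) (t : ℕ) :
    S.rho i j r (t + 1) = S.rho i j r t +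
      (3 * S.eta / S.N) * psi (S.marg t i) * (dot (S.w t r) (S.x i j)) ^ 2 := rfl

theorem rho_le_succ (i : Fin S.N) (j : Fin S.P) (r : Fin S.m) (t : ℕ) :
    S.rho i j r t ≤ S.rho i j r (t + 1) := by
  rw [rho_succ]
  have := S.step_pos
  have := psi_pos (S.marg t i)
  have : 0 ≤ (3 * S.eta / S.N) * psi (S.marg t i) * (dot (S.w t r) (S.x i j)) ^ 2 := by positivity
  linarith

theorem rho_nonneg (i : Fin S.N) (j : Fin S.P) (r : Fin S.m) (t : ℕ) : 0 ≤ S.rho i j r t := by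
  induction t with
  | zero => exact le_rfl
  | succ t ih => exact ih.trans (S.rho_le_succ i j r t)

theorem rho_le_rhoMaxSU (t : ℕ) (r : Fin S.m) {k : Fin S.N} (hk : k ∈ S.SU) {q : Fin S.P}
    (hq : q ≠ S.sig k) : S.rho k q r t ≤ S.rhoMaxSU t := by
  refine le_csSup (Set.Finite.bddAbove ?_) ⟨r, k, hk, q, hq, rfl⟩
  refine (Set.finite_range fun p : Fin S.m × Fin S.N × Fin S.P =>
    S.rho p.2.1 p.2.2 p.1 t).subset ?_
  rintro z ⟨r, k, -, q, -, rfl⟩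
  exact ⟨(r, k, q), rfl⟩

theorem rhoMaxSU_nonneg (t : ℕ) : 0 ≤ S.rhoMaxSU t := by
  refine Real.sSup_nonneg ?_
  rintro z ⟨r, k, -, q, -, rfl⟩
  exact S.rho_nonneg k q r t

theorem rhoMaxSU_le {t : ℕ} {B : ℝ} (hB : 0 ≤ B)
    (h : ∀ r, ∀ k ∈ S.SU, ∀ q, q ≠ S.sig k → S.rho k q r t ≤ B) : S.rhoMaxSU t ≤ B := by
  refine Real.sSup_le ?_ hB
  rintro z ⟨r, k, hk, q, hq, rfl⟩
  exact h r k hk q hq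

theorem rhoMaxSU_le_succ (t : ℕ) : S.rhoMaxSU t ≤ S.rhoMaxSU (t + 1) :=
  S.rhoMaxSU_le (S.rhoMaxSU_nonneg _) fun r k hk q hq =>
    (S.rho_le_succ k q r t).trans (S.rho_le_rhoMaxSU (t + 1) r hk hq)

/-- The bound on initial noise correlations. -/
def initBound : ℝ :=
  2 * S.sigma0 * S.sigman *
    Real.sqrt ((S.d : ℝ) * Real.log ((16 : ℝ) * S.N * S.m * S.P / S.delta))

/-- The bound on inner products of distinct noise patches. -/
def crossBound : ℝ :=
  2 * S.sigman ^ 2 * Real.sqrt ((S.d : ℝ) * Real.log ((16 : ℝ) * S.N ^ 2 * S.P ^ 2 / S.delta))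

theorem initBound_nonneg : 0 ≤ S.initBound := by
  have := S.hsigma0
  have := S.hsigman
  unfold initBound; positivity

theorem crossBound_nonneg : 0 ≤ S.crossBound := by
  unfold crossBound; positivity

/-- Control of a noise correlation by its own coefficient, with cross terms bounded through
uniform bounds on the learnable and on the unlearnable coefficients. -/
theorem abs_dot_w_noise_sub_le (hdyn : S.ATDyn) (hE : S.EventE) {t : ℕ} {r : Fin S.m}
    {BL BU : ℝ} (hBL : 0 ≤ BL) (hBU : 0 ≤ BU)
    (hL : ∀ k ∈ S.SL, ∀ q, q ≠ S.sig k → S.rho k q r t ≤ BL)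
    (hU : ∀ k ∈ S.SU, ∀ q, q ≠ S.sig k → S.rho k q r t ≤ BU)
    (i : Fin S.N) {j : Fin S.P} (hj : j ≠ S.sig i) :
    |dot (S.w t r) (S.x i j) - S.y i * S.rho i j r t * sqnorm (S.x i j)| ≤
      S.initBound + S.crossBound * (S.P * (S.N * BL + S.SU.card * BU)) := by
  obtain ⟨-, hcross, -, -, -, hinit, -, -⟩ := hE
  have hO := S.crossBound_nonneg
  set F : Fin S.N → Fin S.P → ℝ := fun k q =>
    if (k, q) = (i, j) then 0 else S.y k * S.rho k q r t * dot (S.x k q) (S.x i j) with hF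
  have hsplit : dot (S.w t r) (S.x i j) - S.y i * S.rho i j r t * sqnorm (S.x i j) =
      dot (S.w 0 r) (S.x i j) + ∑ k, ∑ q ∈ univ.erase (S.sig k), F k q := by
    have hdiff : ∑ k, ∑ q ∈ univ.erase (S.sig k),
          S.y k * S.rho k q r t * dot (S.x k q) (S.x i j) =
        S.y i * S.rho i j r t * sqnorm (S.x i j) + ∑ k, ∑ q ∈ univ.erase (S.sig k), F k q := by
      rw [← add_sum_erase _ _ (mem_univ i), ← add_sum_erase _ (fun k => ∑ q ∈ _, F k q) (mem_univ i),
        ← add_sum_erase _ _ (mem_erase.mpr ⟨hj, mem_univ j⟩),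
        ← add_sum_erase _ (F i) (mem_erase.mpr ⟨hj, mem_univ j⟩)]
      have h0 : F i j = 0 := by simp [hF]
      have h1 : ∑ q ∈ (univ.erase (S.sig i)).erase j, F i q =
          ∑ q ∈ (univ.erase (S.sig i)).erase j,
            S.y i * S.rho i q r t * dot (S.x i q) (S.x i j) := by
        refine sum_congr rfl fun q hq => ?_
        simp [hF, ne_of_mem_erase hq]
      have h2 : ∑ k ∈ univ.erase i, ∑ q ∈ univ.erase (S.sig k), F k q =
          ∑ k ∈ univ.erase i, ∑ q ∈ univ.erase (S.sig k),
            S.y k * S.rho k q r t * dot (S.x k q) (S.x i j) := by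
        refine sum_congr rfl fun k hk => sum_congr rfl fun q _ => ?_
        simp [hF, ne_of_mem_erase hk]
      rw [h0, h1, h2]
      unfold sqnorm
      ring
    rw [S.dot_w_noise_eq hdyn r i hj t, hdiff]
    ring
  have hterm : ∀ k q, q ≠ S.sig k → |F k q| ≤ S.crossBound * S.rho k q r t := by
    intro k q hq
    have hρ := S.rho_nonneg k q r t
    simp only [hF]
    split_ifs with h
    · rw [abs_zero]; positivity
    · rw [abs_mul, abs_mul, S.abs_y, one_mul, abs_of_nonneg hρ, mul_comm]
      exact mul_le_mul_of_nonneg_right (hcross k i q j hq hj h) hρ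
  have hrow : ∀ k B, 0 ≤ B → (∀ q, q ≠ S.sig k → S.rho k q r t ≤ B) →
      |∑ q ∈ univ.erase (S.sig k), F k q| ≤ S.crossBound * (S.P * B) := by
    intro k B hB0 hB
    calc |∑ q ∈ univ.erase (S.sig k), F k q|
        ≤ ∑ q ∈ univ.erase (S.sig k), |F k q| := abs_sum_le_sum_abs _ _
      _ ≤ ∑ q ∈ univ.erase (S.sig k), S.crossBound * B :=
          sum_le_sum fun q hq => (hterm k q (ne_of_mem_erase hq)).trans
            (mul_le_mul_of_nonneg_left (hB q (ne_of_mem_erase hq)) hO)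
      _ ≤ ∑ q : Fin S.P, S.crossBound * B :=
          sum_le_sum_of_subset_of_nonneg (erase_subset _ _) fun _ _ _ => by positivity
      _ = S.crossBound * (S.P * B) := by simp; ring
  have hcardL : (S.SL.card : ℝ) ≤ S.N := by
    exact_mod_cast (card_le_univ S.SL).trans_eq (Fintype.card_fin _)
  have htotal : |∑ k, ∑ q ∈ univ.erase (S.sig k), F k q| ≤
      S.crossBound * (S.P * (S.N * BL + S.SU.card * BU)) := by
    calc |∑ k, ∑ q ∈ univ.erase (S.sig k), F k q|
        ≤ ∑ k, |∑ q ∈ univ.erase (S.sig k), F k q| := abs_sum_le_sum_abs _ _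
      _ = ∑ k ∈ S.SL, |∑ q ∈ univ.erase (S.sig k), F k q| +
            ∑ k ∈ S.SU, |∑ q ∈ univ.erase (S.sig k), F k q| := by
          rw [← sum_union S.hdisj, S.hunion]
      _ ≤ ∑ k ∈ S.SL, S.crossBound * (S.P * BL) + ∑ k ∈ S.SU, S.crossBound * (S.P * BU) :=
          add_le_add (sum_le_sum fun k hk => hrow k BL hBL (hL k hk))
            (sum_le_sum fun k hk => hrow k BU hBU (hU k hk))
      _ = S.crossBound * (S.P * (S.SL.card * BL + S.SU.card * BU)) := by simp; ring
      _ ≤ S.crossBound * (S.P * (S.N * BL + S.SU.card * BU)) := by gcongr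
  rw [hsplit]
  exact (abs_add_le _ _).trans (add_le_add (hinit r i j hj) htotal)

/-- The typical squared norm `σ_n² d` of a noise patch. -/
def noiseSq : ℝ := S.sigman ^ 2 * S.d

/-- The scale `(log T)^{1/3}` of a saturated noise correlation. -/
def satScale : ℝ := Real.log S.T ^ ((1 : ℝ) / 3)

/-- The initialization part `σ_0/(σ_n √d)` of the bound on learnable coefficients. -/
def baseCoef : ℝ := S.sigma0 / (S.sigman * Real.sqrt S.d)

/-- The factor of `(ρ_max^{S_U})²` in the bound on learnable coefficients. -/
def quadCoef : ℝ :=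
  S.pun * S.N * S.sigman ^ 2 * Real.sqrt S.d / (100 * Real.log S.T ^ ((2 : ℝ) / 3))

/-- The bound on learnable noise correlations when unlearnable coefficients are at most `M`. -/
def corrBound (M : ℝ) : ℝ :=
  3 / 2 * S.initBound + 21 / 20 * (S.crossBound * S.P * S.SU.card) * M

/-- The ceiling for unlearnable noise coefficients. -/
def coefCap : ℝ := 10 * S.satScale / S.noiseSq

/-- The numerical consequences of the parameter constraints used to control the dynamics. -/
structure ParamBounds : Prop where
  two_le_T : 2 ≤ S.T
  one_le_satScale : 1 ≤ S.satScale
  satScale_pow : S.satScale ^ 3 = Real.log S.T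
  quadCoef_nonneg : 0 ≤ S.quadCoef
  absorb : ∀ M, 0 ≤ M → M ≤ S.coefCap →
    (3 / 2 * S.noiseSq + S.crossBound * S.P * S.N) * (S.baseCoef + S.quadCoef * M ^ 2) ≤
      S.initBound / 2 + S.crossBound * S.P * S.SU.card * M / 20
  corr_cube : S.m * S.P * S.corrBound S.coefCap ^ 3 ≤ 1 / 2
  noise_step : 768 * (S.eta * S.noiseSq) * S.satScale ≤ 1
  late_init : 18 * S.m / S.alpha ^ 2 * S.initBound ^ 2 ≤ 9 / 10 * S.baseCoef
  late_cross : 8 * S.m / S.alpha ^ 2 * (21 / 20 * (S.crossBound * S.P * S.SU.card)) ^ 2 ≤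
    S.quadCoef
  early_time : S.SL.Nonempty →
    72 / (S.alpha ^ 3 * S.SL.card * S.sigma0) * (3 / 2 * S.initBound) ^ 2 ≤ S.baseCoef / 10
  signal_step : 9 * (S.eta * S.alpha ^ 2) ≤ 1
  signal_init :
    S.m * (S.alpha * (S.sigma0 * Real.sqrt (2 * Real.log ((16 : ℝ) * S.m / S.delta)))) ^ 3 ≤ 1 / 2
  strength_cube : S.alpha ^ 3 / 2 ≤ (S.alpha - S.eps) ^ 3
  base_le : S.noiseSq * S.baseCoef ≤ 1

theorem noiseSq_pos : 0 < S.noiseSq := by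
  have := S.hsigman
  have : (0 : ℝ) < S.d := by exact_mod_cast S.hd
  unfold noiseSq; positivity

theorem baseCoef_pos : 0 < S.baseCoef := by
  have := S.hsigman
  have := S.hsigma0
  have : (0 : ℝ) < S.d := by exact_mod_cast S.hd
  unfold baseCoef; positivity

theorem one_le_m : (1 : ℝ) ≤ S.m := by exact_mod_cast S.hm

theorem corrBound_mono {M M' : ℝ} (h : M ≤ M') : S.corrBound M ≤ S.corrBound M' := by
  have := S.crossBound_nonneg
  unfold corrBound
  gcongr

theorem initBound_le_corrBound {M : ℝ} (hM : 0 ≤ M) : 3 / 2 * S.initBound ≤ S.corrBound M := by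
  have := S.crossBound_nonneg
  have : 0 ≤ 21 / 20 * (S.crossBound * S.P * S.SU.card) * M := by positivity
  unfold corrBound
  linarith

theorem corrBound_nonneg {M : ℝ} (hM : 0 ≤ M) : 0 ≤ S.corrBound M :=
  le_trans (by linarith [S.initBound_nonneg]) (S.initBound_le_corrBound hM)

variable {S}

theorem ParamBounds.coefCap_nonneg (hp : S.ParamBounds) : 0 ≤ S.coefCap := by
  have := hp.one_le_satScale
  have := S.noiseSq_pos
  unfold coefCap; positivity

theorem ParamBounds.corrBound_cube_le (hp : S.ParamBounds) {M : ℝ} (hM : 0 ≤ M)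
    (hMc : M ≤ S.coefCap) : S.m * S.P * S.corrBound M ^ 3 ≤ 1 / 2 := by
  refine le_trans ?_ hp.corr_cube
  have := S.corrBound_nonneg hM
  have := S.corrBound_mono hMc
  gcongr

theorem ParamBounds.corrBound_le_one (hp : S.ParamBounds) {M : ℝ} (hM : 0 ≤ M)
    (hMc : M ≤ S.coefCap) : S.corrBound M ≤ 1 := by
  by_contra! h
  have h1 := hp.corrBound_cube_le hM hMc
  have hP : (1 : ℝ) ≤ S.P := by exact_mod_cast S.hP
  have h2 : (1 : ℝ) ≤ S.corrBound M ^ 3 := one_le_pow₀ h.le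
  have h3 : (1 : ℝ) ≤ S.m * S.P := one_le_mul_of_one_le_of_one_le S.one_le_m hP
  have h4 : (1 : ℝ) ≤ S.m * S.P * S.corrBound M ^ 3 := one_le_mul_of_one_le_of_one_le h3 h2
  linarith

theorem alpha_sub_eps_le_strength (t : ℕ) {i : Fin S.N} (hi : i ∈ S.SL) :
    S.alpha - S.eps ≤ S.strength t i := (S.hadvlearn t i hi).1

theorem strength_le_alpha (t : ℕ) {i : Fin S.N} (hi : i ∈ S.SL) :
    S.strength t i ≤ S.alpha := (S.hadvlearn t i hi).2

theorem strength_pos (t : ℕ) {i : Fin S.N} (hi : i ∈ S.SL) : 0 < S.strength t i :=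
  (sub_pos.mpr S.hepsalpha).trans_le (alpha_sub_eps_le_strength t hi)

theorem wsig_le_succ (hdyn : S.ATDyn) (t : ℕ) (r : Fin S.m) :
    S.wsig t r ≤ S.wsig (t + 1) r := by
  rw [S.wsig_succ hdyn]
  have h : 0 ≤ (3 * S.eta / S.N) *
      ∑ i ∈ S.SL, psi (S.marg t i) * (S.wsig t r ^ 2 * S.strength t i ^ 3) := by
    refine mul_nonneg S.step_pos.le (sum_nonneg fun i hi => ?_)
    have := psi_pos (S.marg t i)
    have := strength_pos t hi
    positivity
  linarith

theorem wsig_mono (hdyn : S.ATDyn) (r : Fin S.m) : Monotone fun t => S.wsig t r :=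
  monotone_nat_of_le_succ fun t => wsig_le_succ hdyn t r

/-- The signal part of a learnable margin is at least that of any neuron with a positive
signal weight, up to a constant. -/
theorem signal_margin_lower (hdyn : S.ATDyn) (hE : S.EventE) (hp : S.ParamBounds) (t : ℕ)
    {i : Fin S.N} (hi : i ∈ S.SL) (r : Fin S.m) :
    (S.wsig t r * S.strength t i) ^ 3 - 1 / 2 ≤ ∑ r, (S.wsig t r * S.strength t i) ^ 3 := by
  obtain ⟨-, -, -, -, hsig, -, -, -⟩ := hE
  set c := S.sigma0 * Real.sqrt (2 * Real.log ((16 : ℝ) * S.m / S.delta)) with hc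
  have hc0 : 0 ≤ c := mul_nonneg S.hsigma0.le (Real.sqrt_nonneg _)
  have hα := S.halpha
  have hβ := strength_pos t hi
  have hterm : ∀ r, -(S.alpha * c) ^ 3 ≤ (S.wsig t r * S.strength t i) ^ 3 := by
    intro r
    have h1 : -c ≤ S.wsig t r := by
      have h0 : -c ≤ S.wsig 0 r := by
        have := (abs_le.mp (hsig r)).1
        rwa [dot_e1] at this
      exact h0.trans (wsig_mono hdyn r (Nat.zero_le t))
    have h2 : -(S.alpha * c) ≤ S.wsig t r * S.strength t i := by
      have h3 : S.strength t i * c ≤ S.alpha * c :=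
        mul_le_mul_of_nonneg_right (strength_le_alpha t hi) hc0
      nlinarith
    have := (Odd.strictMono_pow (R := ℝ) (n := 3) (by decide)).monotone h2
    simpa [Odd.neg_pow (show Odd 3 by decide)] using this
  have hrest : -(S.m * (S.alpha * c) ^ 3) ≤
      ∑ r ∈ univ.erase r, (S.wsig t r * S.strength t i) ^ 3 := by
    have h1 := card_nsmul_le_sum (univ.erase r) (fun r => (S.wsig t r * S.strength t i) ^ 3)
      (-(S.alpha * c) ^ 3) fun r _ => hterm r
    refine le_trans ?_ h1
    have h2 : ((univ.erase r).card : ℝ) ≤ S.m := by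
      exact_mod_cast (card_le_univ _).trans_eq (Fintype.card_fin _)
    rw [nsmul_eq_mul]
    have : 0 ≤ (S.alpha * c) ^ 3 := by positivity
    nlinarith
  rw [← add_sum_erase _ _ (mem_univ r)]
  linarith [hp.signal_init]

theorem noise_margin_lower {t : ℕ} {i : Fin S.N} {V : ℝ} (hV : 0 ≤ V)
    (hcube : S.m * S.P * V ^ 3 ≤ 1 / 2)
    (h : ∀ r p, p ≠ S.sig i → -V ≤ S.y i * dot (S.w t r) (S.x i p)) :
    -(1 / 2) ≤ ∑ r, ∑ p ∈ univ.erase (S.sig i), (S.y i * dot (S.w t r) (S.x i p)) ^ 3 := by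
  have h1 : ∑ _r : Fin S.m, ∑ _p ∈ univ.erase (S.sig i), (-V ^ 3) ≤
      ∑ r, ∑ p ∈ univ.erase (S.sig i), (S.y i * dot (S.w t r) (S.x i p)) ^ 3 := by
    refine sum_le_sum fun r _ => sum_le_sum fun p hp => ?_
    have := (Odd.strictMono_pow (R := ℝ) (n := 3) (by decide)).monotone
      (h r p (ne_of_mem_erase hp))
    simpa [Odd.neg_pow (show Odd 3 by decide)] using this
  refine le_trans ?_ h1
  have h2 : ((univ.erase (S.sig i)).card : ℝ) ≤ S.P := by
    exact_mod_cast (card_le_univ _).trans_eq (Fintype.card_fin _)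
  rw [sum_const, sum_const, card_univ, Fintype.card_fin, nsmul_eq_mul, nsmul_eq_mul]
  have : S.m * ((univ.erase (S.sig i)).card * V ^ 3) ≤ S.m * (S.P * V ^ 3) := by gcongr
  linarith

theorem noise_margin_upper {t : ℕ} {i : Fin S.N} {V : ℝ} (hV : 0 ≤ V)
    (hcube : S.m * S.P * V ^ 3 ≤ 1 / 2)
    (h : ∀ r p, p ≠ S.sig i → S.y i * dot (S.w t r) (S.x i p) ≤ V) :
    ∑ r, ∑ p ∈ univ.erase (S.sig i), (S.y i * dot (S.w t r) (S.x i p)) ^ 3 ≤ 1 / 2 := by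
  have h1 : ∑ r, ∑ p ∈ univ.erase (S.sig i), (S.y i * dot (S.w t r) (S.x i p)) ^ 3 ≤
      ∑ _r : Fin S.m, ∑ _p ∈ univ.erase (S.sig i), V ^ 3 :=
    sum_le_sum fun r _ => sum_le_sum fun p hp =>
      (Odd.strictMono_pow (R := ℝ) (n := 3) (by decide)).monotone (h r p (ne_of_mem_erase hp))
  refine h1.trans ?_
  have h2 : ((univ.erase (S.sig i)).card : ℝ) ≤ S.P := by
    exact_mod_cast (card_le_univ _).trans_eq (Fintype.card_fin _)
  rw [sum_const, sum_const, card_univ, Fintype.card_fin, nsmul_eq_mul, nsmul_eq_mul]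
  have : S.m * ((univ.erase (S.sig i)).card * V ^ 3) ≤ S.m * (S.P * V ^ 3) := by gcongr
  linarith

theorem mul_exp_neg_cube_half_le_one {z : ℝ} (hz : 0 ≤ z) : z * Real.exp (-(z ^ 3 / 2)) ≤ 1 := by
  rw [Real.exp_neg, ← div_eq_mul_inv, div_le_one (Real.exp_pos _)]
  have h := Real.add_one_le_exp (z ^ 3 / 2)
  nlinarith [mul_nonneg hz (sq_nonneg (z - 1)), sq_nonneg (z - 1)]

/-- The total gradient weight of the learnable samples in one step is paid for by the decrease of
the reciprocal of a positive signal weight. -/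
theorem sum_psi_le (hdyn : S.ATDyn) (hE : S.EventE) (hp : S.ParamBounds) {t : ℕ}
    (hnoise : ∀ i ∈ S.SL, -(1 / 2) ≤
      ∑ r, ∑ p ∈ univ.erase (S.sig i), (S.y i * dot (S.w t r) (S.x i p)) ^ 3)
    {r : Fin S.m} (hw : 0 < S.wsig t r) :
    (3 * S.eta / S.N) * ∑ i ∈ S.SL, psi (S.marg t i) ≤
      4 / S.alpha ^ 3 * (1 / S.wsig t r - 1 / S.wsig (t + 1) r) := by
  have hα := S.halpha
  have hη := S.heta
  have hstep := S.step_pos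
  have hN : (0 : ℝ) < S.N := by exact_mod_cast S.hN
  set w := S.wsig t r with hwdef
  set Ψ := ∑ i ∈ S.SL, psi (S.marg t i) with hΨ
  have hΨ0 : 0 ≤ Ψ := sum_nonneg fun i _ => (psi_pos _).le
  have hcube : ∀ i ∈ S.SL, S.alpha ^ 3 / 2 ≤ S.strength t i ^ 3 := fun i hi =>
    hp.strength_cube.trans (pow_le_pow_left₀ (sub_pos.mpr S.hepsalpha).le
      (alpha_sub_eps_le_strength t hi) 3)
  have hlow : w + (3 * S.eta / S.N) * (Ψ * (w ^ 2 * (S.alpha ^ 3 / 2))) ≤ S.wsig (t + 1) r := by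
    rw [S.wsig_succ hdyn, hΨ, sum_mul]
    gcongr with i hi
    · exact (psi_pos _).le
    · exact hcube i hi
  have hpsi : ∀ i ∈ S.SL, psi (S.marg t i) ≤ 3 * Real.exp (-((S.alpha * w) ^ 3 / 2)) := by
    intro i hi
    have hm : (S.alpha * w) ^ 3 / 2 - 1 ≤ S.marg t i := by
      rw [S.marg_eq_learnable t hi]
      have h1 := signal_margin_lower hdyn hE hp t hi r
      have h2 := hnoise i hi
      have h3 : w ^ 3 * (S.alpha ^ 3 / 2) ≤ w ^ 3 * S.strength t i ^ 3 := by
        have := hcube i hi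
        gcongr
      rw [← hwdef, mul_pow] at h1
      rw [mul_pow]
      linarith
    calc psi (S.marg t i) ≤ Real.exp (-S.marg t i) := psi_le_exp_neg _
      _ ≤ Real.exp (1 + -((S.alpha * w) ^ 3 / 2)) := Real.exp_le_exp.mpr (by linarith)
      _ = Real.exp 1 * Real.exp (-((S.alpha * w) ^ 3 / 2)) := Real.exp_add _ _
      _ ≤ 3 * Real.exp (-((S.alpha * w) ^ 3 / 2)) := by
          gcongr
          linarith [Real.exp_one_lt_d9]
  have hΨle : Ψ ≤ S.N * (3 * Real.exp (-((S.alpha * w) ^ 3 / 2))) := by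
    have h1 := sum_le_card_nsmul S.SL (fun i => psi (S.marg t i)) _ hpsi
    refine h1.trans ?_
    rw [nsmul_eq_mul]
    have : (S.SL.card : ℝ) ≤ S.N := by
      exact_mod_cast (card_le_univ S.SL).trans_eq (Fintype.card_fin _)
    gcongr
  have hup : S.wsig (t + 1) r ≤ 2 * w := by
    have h1 : S.wsig (t + 1) r ≤ w + (3 * S.eta / S.N) * (Ψ * (w ^ 2 * S.alpha ^ 3)) := by
      rw [S.wsig_succ hdyn, hΨ, sum_mul]
      gcongr with i hi
      · exact (psi_pos _).le
      · exact (strength_pos t hi).le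
      · exact strength_le_alpha t hi
    have h2 : (3 * S.eta / S.N) * (Ψ * (w ^ 2 * S.alpha ^ 3)) ≤
        (3 * S.eta / S.N) * (S.N * (3 * Real.exp (-((S.alpha * w) ^ 3 / 2))) *
          (w ^ 2 * S.alpha ^ 3)) := by gcongr
    have h3 : (3 * S.eta / S.N) * (S.N * (3 * Real.exp (-((S.alpha * w) ^ 3 / 2))) *
          (w ^ 2 * S.alpha ^ 3)) =
        w * (9 * (S.eta * S.alpha ^ 2)) *
          ((S.alpha * w) * Real.exp (-((S.alpha * w) ^ 3 / 2))) := by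
      field_simp; ring
    have h4 : w * (9 * (S.eta * S.alpha ^ 2)) *
          ((S.alpha * w) * Real.exp (-((S.alpha * w) ^ 3 / 2))) ≤ w * 1 * 1 := by
      gcongr
      · exact hp.signal_step
      · exact mul_exp_neg_cube_half_le_one (by positivity)
    linarith
  have hw' : 0 < S.wsig (t + 1) r := hw.trans_le (wsig_le_succ hdyn t r)
  have hrecip : (3 * S.eta / S.N) * (Ψ * (w ^ 2 * (S.alpha ^ 3 / 2))) / (w * (2 * w)) ≤
      1 / w - 1 / S.wsig (t + 1) r := by
    rw [div_sub_div _ _ hw.ne' hw'.ne']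
    apply div_le_div₀
    · linarith [wsig_le_succ hdyn t r]
    · linarith
    · positivity
    · gcongr
  calc (3 * S.eta / S.N) * Ψ
      = 4 / S.alpha ^ 3 *
          ((3 * S.eta / S.N) * (Ψ * (w ^ 2 * (S.alpha ^ 3 / 2))) / (w * (2 * w))) := by
        field_simp; norm_num
    _ ≤ _ := by gcongr

theorem card_SU_le : (S.SU.card : ℝ) ≤ S.N := by
  exact_mod_cast (card_le_univ S.SU).trans_eq (Fintype.card_fin _)

/-- Consequences for the correlations of a deviation bound from the own-coefficient term. -/
theorem corr_bounds_of_dev (hE : S.EventE) {t : ℕ} {r : Fin S.m} {i : Fin S.N} {j : Fin S.P}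
    (hj : j ≠ S.sig i) {D : ℝ}
    (h : |dot (S.w t r) (S.x i j) - S.y i * S.rho i j r t * sqnorm (S.x i j)| ≤ D) :
    |dot (S.w t r) (S.x i j)| ≤ D + 3 / 2 * S.noiseSq * S.rho i j r t ∧
      S.noiseSq * S.rho i j r t / 2 - D ≤ S.y i * dot (S.w t r) (S.x i j) := by
  have hρ := S.rho_nonneg i j r t
  obtain ⟨hlo, hhi⟩ := hE.1 i j hj
  have hlo' : S.noiseSq / 2 ≤ sqnorm (S.x i j) := hlo
  have hhi' : sqnorm (S.x i j) ≤ 3 / 2 * S.noiseSq := by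
    refine hhi.trans_eq ?_
    unfold noiseSq; ring
  have hs : 0 ≤ sqnorm (S.x i j) := (half_pos S.noiseSq_pos).le.trans hlo'
  have hup := mul_le_mul_of_nonneg_left hhi' hρ
  have hdown := mul_le_mul_of_nonneg_left hlo' hρ
  obtain ⟨h1, h2⟩ := abs_le.mp h
  constructor
  · have h3 : |S.y i * S.rho i j r t * sqnorm (S.x i j)| =
        S.rho i j r t * sqnorm (S.x i j) := by
      rw [abs_mul, abs_mul, S.abs_y, one_mul, abs_of_nonneg hρ, abs_of_nonneg hs]
    have h4 := abs_sub_abs_le_abs_sub (dot (S.w t r) (S.x i j))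
      (S.y i * S.rho i j r t * sqnorm (S.x i j))
    linarith
  · rcases S.hy i with hy | hy <;> rw [hy] at h1 h2 ⊢ <;> nlinarith

/-- Correlations while all noise coefficients are negligible. -/
theorem corr_le_of_small (hdyn : S.ATDyn) (hE : S.EventE) (hp : S.ParamBounds) {t : ℕ}
    (hsmall : ∀ i j r, j ≠ S.sig i → S.rho i j r t ≤ S.baseCoef / 10) {i : Fin S.N} {j : Fin S.P}
    (hj : j ≠ S.sig i) (r : Fin S.m) :
    |dot (S.w t r) (S.x i j)| ≤ 3 / 2 * S.initBound := by
  have hbase := S.baseCoef_pos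
  have hO := S.crossBound_nonneg
  have hdev := S.abs_dot_w_noise_sub_le hdyn hE (t := t) (r := r)
    (BL := S.baseCoef / 10) (BU := S.baseCoef / 10) (by positivity) (by positivity)
    (fun k _ q hq => hsmall k q r hq) (fun k _ q hq => hsmall k q r hq) i hj
  refine (corr_bounds_of_dev hE hj hdev).1.trans ?_
  have habs := hp.absorb 0 le_rfl hp.coefCap_nonneg
  have h1 := mul_le_mul_of_nonneg_left (hsmall i j r hj) S.noiseSq_pos.le
  have h2 : S.crossBound * (S.P * (S.N * (S.baseCoef / 10) + S.SU.card * (S.baseCoef / 10))) ≤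
      S.crossBound * (S.P * (S.N * (S.baseCoef / 10) + S.N * (S.baseCoef / 10))) := by
    have := card_SU_le (S := S)
    gcongr
  have h3 : 0 ≤ S.crossBound * S.P * S.N * S.baseCoef := by positivity
  have h4 : 0 ≤ S.noiseSq * S.baseCoef := mul_nonneg S.noiseSq_pos.le hbase.le
  linarith

/-- Correlations when the coefficients obey the two-level bound with parameter `M`. -/
theorem corr_bounds_of_levels (hdyn : S.ATDyn) (hE : S.EventE) (hp : S.ParamBounds) {t : ℕ}
    {M : ℝ} (hM : 0 ≤ M) (hMc : M ≤ S.coefCap)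
    (hL : ∀ r, ∀ k ∈ S.SL, ∀ q, q ≠ S.sig k →
      S.rho k q r t ≤ S.baseCoef + S.quadCoef * M ^ 2)
    (hU : ∀ r, ∀ k ∈ S.SU, ∀ q, q ≠ S.sig k → S.rho k q r t ≤ M)
    {i : Fin S.N} {j : Fin S.P} (hj : j ≠ S.sig i) (r : Fin S.m) :
    |dot (S.w t r) (S.x i j)| ≤ S.corrBound M + 3 / 2 * S.noiseSq * S.rho i j r t ∧
      S.noiseSq * S.rho i j r t / 2 - S.corrBound M ≤ S.y i * dot (S.w t r) (S.x i j) ∧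
      (i ∈ S.SL → |dot (S.w t r) (S.x i j)| ≤ S.corrBound M) := by
  have hbase := S.baseCoef_pos
  have hq := hp.quadCoef_nonneg
  have hO := S.crossBound_nonneg
  have hb := S.noiseSq_pos
  have habs := hp.absorb M hM hMc
  set B := S.baseCoef + S.quadCoef * M ^ 2 with hB
  have hB0 : 0 ≤ B := by positivity
  have hdev := S.abs_dot_w_noise_sub_le hdyn hE (t := t) (r := r) hB0 hM (hL r) (hU r) i hj
  have hnB : 0 ≤ 3 / 2 * S.noiseSq * B := by positivity
  have hD : S.initBound + S.crossBound * (S.P * (S.N * B + S.SU.card * M)) +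
      3 / 2 * S.noiseSq * B ≤ S.corrBound M := by
    unfold corrBound
    linarith
  obtain ⟨h1, h2⟩ := corr_bounds_of_dev hE hj hdev
  refine ⟨by linarith, by linarith, fun hi => ?_⟩
  have h3 := mul_le_mul_of_nonneg_left (hL r i hi j hj) hb.le
  linarith

theorem one_div_nine_le_psi {z : ℝ} (hz : z ≤ 2) : 1 / 9 ≤ psi z := by
  have h1 : Real.exp 2 = Real.exp 1 * Real.exp 1 := by rw [← Real.exp_add]; norm_num
  have h2 : Real.exp z ≤ 8 := by
    refine (Real.exp_le_exp.mpr hz).trans ?_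
    rw [h1]
    nlinarith [Real.exp_one_lt_d9, Real.exp_pos 1]
  exact one_div_le_one_div_of_le (by positivity) (by linarith)

/-- While no signal weight has passed `1/(αm)`, all noise coefficients remain negligible. -/
theorem rho_le_of_early (hdyn : S.ATDyn) (hE : S.EventE) (hp : S.ParamBounds)
    (hSL : S.SL.Nonempty) (t : ℕ)
    (hearly : ∀ s < t, ∀ r, S.wsig s r ≤ 1 / (S.alpha * S.m)) :
    ∀ i j r, j ≠ S.sig i → S.rho i j r t ≤ S.baseCoef / 10 := by
  obtain ⟨r₀, hr₀⟩ := hE.2.2.2.2.2.2.1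
  rw [dot_e1] at hr₀
  change S.sigma0 / 2 ≤ S.wsig 0 r₀ at hr₀
  have hα := S.halpha
  have hσ := S.hsigma0
  have hA := S.initBound_nonneg
  have hm := S.one_le_m
  have hn : (0 : ℝ) < S.SL.card := by exact_mod_cast hSL.card_pos
  have hwpos : ∀ s, 0 < S.wsig s r₀ := fun s =>
    (half_pos hσ).trans_le (hr₀.trans (wsig_mono hdyn r₀ (Nat.zero_le s)))
  set K := 36 / (S.alpha ^ 3 * S.SL.card) * (3 / 2 * S.initBound) ^ 2 with hK
  have hK0 : 0 ≤ K := by positivity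
  have hpot : ∀ s, K * (1 / S.wsig 0 r₀ - 1 / S.wsig s r₀) ≤ S.baseCoef / 10 := by
    intro s
    have h1 : 1 / S.wsig 0 r₀ ≤ 1 / (S.sigma0 / 2) :=
      one_div_le_one_div_of_le (by positivity) hr₀
    have h2 : 0 ≤ 1 / S.wsig s r₀ := by have := hwpos s; positivity
    calc K * (1 / S.wsig 0 r₀ - 1 / S.wsig s r₀) ≤ K * (1 / (S.sigma0 / 2)) := by
          gcongr; linarith
      _ = 72 / (S.alpha ^ 3 * S.SL.card * S.sigma0) * (3 / 2 * S.initBound) ^ 2 := by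
          rw [hK]; field_simp; ring
      _ ≤ _ := hp.early_time hSL
  have key : ∀ i j r, j ≠ S.sig i →
      S.rho i j r t ≤ K * (1 / S.wsig 0 r₀ - 1 / S.wsig t r₀) := by
    induction t with
    | zero => intro i j r _; simp [rho]
    | succ t ih =>
      have ih := ih fun s hs => hearly s (hs.trans (Nat.lt_succ_self t))
      have hcorr : ∀ i j r, j ≠ S.sig i →
          |dot (S.w t r) (S.x i j)| ≤ 3 / 2 * S.initBound := fun i j r hj =>
        corr_le_of_small hdyn hE hp (fun i j r hj => (ih i j r hj).trans (hpot t)) hj r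
      have hycorr : ∀ i j r, j ≠ S.sig i →
          |S.y i * dot (S.w t r) (S.x i j)| ≤ 3 / 2 * S.initBound := fun i j r hj => by
        rw [abs_mul, S.abs_y, one_mul]; exact hcorr i j r hj
      have hcube : S.m * S.P * (3 / 2 * S.initBound) ^ 3 ≤ 1 / 2 := by
        refine le_trans ?_ hp.corr_cube
        have := S.initBound_le_corrBound hp.coefCap_nonneg
        gcongr
      have hsum := sum_psi_le hdyn hE hp (t := t)
        (fun i _ => noise_margin_lower (by positivity) hcube
          fun r p hp => (abs_le.mp (hycorr i p r hp)).1) (hwpos t)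
      have hpsi : ∀ i ∈ S.SL, 1 / 9 ≤ psi (S.marg t i) := by
        intro i hi
        apply one_div_nine_le_psi
        rw [S.marg_eq_learnable t hi]
        have h1 := noise_margin_upper (t := t) (i := i) (by positivity) hcube
          fun r p hp => (abs_le.mp (hycorr i p r hp)).2
        have h2 : ∑ r, (S.wsig t r * S.strength t i) ^ 3 ≤ ∑ _r : Fin S.m, (1 / (S.m : ℝ)) := by
          refine sum_le_sum fun r _ => ?_
          have hβ := strength_pos t hi
          have h3 : S.wsig t r * S.strength t i ≤ 1 / S.m := by
            calc S.wsig t r * S.strength t i ≤ 1 / (S.alpha * S.m) * S.strength t i :=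
                  mul_le_mul_of_nonneg_right (hearly t (Nat.lt_succ_self t) r) hβ.le
              _ ≤ 1 / (S.alpha * S.m) * S.alpha :=
                  mul_le_mul_of_nonneg_left (strength_le_alpha t hi) (by positivity)
              _ = 1 / S.m := by field_simp
          calc (S.wsig t r * S.strength t i) ^ 3 ≤ (1 / (S.m : ℝ)) ^ 3 :=
                (Odd.strictMono_pow (R := ℝ) (n := 3) (by decide)).monotone h3
            _ ≤ 1 / (S.m : ℝ) := pow_le_of_le_one (by positivity)
                (by rw [div_le_one (by linarith)]; exact hm) (by norm_num)
        have h4 : ∑ _r : Fin S.m, (1 / (S.m : ℝ)) = 1 := by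
          rw [sum_const, card_univ, Fintype.card_fin, nsmul_eq_mul]
          field_simp
        linarith
      have hcount : (3 * S.eta / S.N) * (S.SL.card * (1 / 9)) ≤
          4 / S.alpha ^ 3 * (1 / S.wsig t r₀ - 1 / S.wsig (t + 1) r₀) := by
        refine le_trans ?_ hsum
        have := card_nsmul_le_sum S.SL (fun i => psi (S.marg t i)) (1 / 9) hpsi
        rw [nsmul_eq_mul] at this
        exact mul_le_mul_of_nonneg_left this S.step_pos.le
      have htime : 3 * S.eta / S.N ≤ 36 / (S.alpha ^ 3 * S.SL.card) *
          (1 / S.wsig t r₀ - 1 / S.wsig (t + 1) r₀) := by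
        rw [div_mul_eq_mul_div (4 : ℝ), le_div_iff₀ (by positivity)] at hcount
        rw [div_mul_eq_mul_div (36 : ℝ), le_div_iff₀ (by positivity)]
        linarith
      intro i j r hj
      have h1 : (3 * S.eta / S.N) * psi (S.marg t i) * (dot (S.w t r) (S.x i j)) ^ 2 ≤
          (3 * S.eta / S.N) * 1 * (3 / 2 * S.initBound) ^ 2 := by
        have := S.step_pos
        have := psi_le_one (S.marg t i)
        have : (dot (S.w t r) (S.x i j)) ^ 2 ≤ (3 / 2 * S.initBound) ^ 2 :=
          sq_le_sq' (abs_le.mp (hcorr i j r hj)).1 (abs_le.mp (hcorr i j r hj)).2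
        gcongr
      have h2 := mul_le_mul_of_nonneg_right htime (sq_nonneg (3 / 2 * S.initBound))
      have h3 := ih i j r hj
      rw [rho_succ]
      rw [hK] at h3 ⊢
      linarith
  exact fun i j r hj => (key i j r hj).trans (hpot t)

/-- The coefficient bounds propagated after some signal weight has passed `1/(αm)` at time
`a`, on the neuron `r'`. -/
structure LateBounds (S : Setting) (a : ℕ) (r' : Fin S.m) (t : ℕ) : Prop where
  learnable : ∀ r, ∀ i ∈ S.SL, ∀ j, j ≠ S.sig i → S.rho i j r t ≤ S.baseCoef / 10 +
    4 / S.alpha ^ 3 * (1 / S.wsig a r' - 1 / S.wsig t r') * S.corrBound (S.rhoMaxSU t) ^ 2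
  unlearnable : ∀ r, ∀ k ∈ S.SU, ∀ q, q ≠ S.sig k →
    S.noiseSq * S.rho k q r t ≤ 9 * S.satScale + t / (S.T + 1) * S.satScale

theorem LateBounds.rhoMaxSU_le_coefCap {a t : ℕ} {r' : Fin S.m} (h : S.LateBounds a r' t)
    (hp : S.ParamBounds) (ht : t ≤ S.T + 1) : S.rhoMaxSU t ≤ S.coefCap := by
  refine S.rhoMaxSU_le hp.coefCap_nonneg fun r k hk q hq => ?_
  have hb := S.noiseSq_pos
  have hs := hp.one_le_satScale
  unfold coefCap
  rw [le_div_iff₀ hb, mul_comm]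
  have h1 : (t : ℝ) / (S.T + 1) ≤ 1 := by
    rw [div_le_one (by positivity)]
    exact_mod_cast ht
  have h2 := h.unlearnable r k hk q hq
  have h3 := mul_le_mul_of_nonneg_right h1 (by linarith : 0 ≤ S.satScale)
  linarith

theorem LateBounds.learnable_le {a t : ℕ} {r' : Fin S.m} (h : S.LateBounds a r' t)
    (hdyn : S.ATDyn) (hp : S.ParamBounds) (hat : a ≤ t)
    (ha : 1 / (S.alpha * S.m) < S.wsig a r') (r : Fin S.m) {i : Fin S.N} (hi : i ∈ S.SL)
    {j : Fin S.P} (hj : j ≠ S.sig i) :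
    S.rho i j r t ≤ S.baseCoef + S.quadCoef * S.rhoMaxSU t ^ 2 := by
  have hα := S.halpha
  have hm := S.one_le_m
  have hthr : 0 < 1 / (S.alpha * S.m) := by positivity
  have hwt : 0 < S.wsig t r' := (hthr.trans ha).trans_le (wsig_mono hdyn r' hat)
  have h1 : 1 / S.wsig a r' - 1 / S.wsig t r' ≤ S.alpha * S.m := by
    have h2 : 1 / S.wsig a r' ≤ S.alpha * S.m := by
      rw [div_le_iff₀ (hthr.trans ha)]
      rw [div_lt_iff₀ (by positivity)] at ha
      linarith
    have : 0 ≤ 1 / S.wsig t r' := by positivity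
    linarith
  set M := S.rhoMaxSU t with hM
  set X := 21 / 20 * (S.crossBound * S.P * S.SU.card) with hX
  have hsq : S.corrBound M ^ 2 ≤ 2 * ((3 / 2 * S.initBound) ^ 2 + (X * M) ^ 2) := by
    unfold corrBound
    rw [← hX]
    nlinarith [sq_nonneg (3 / 2 * S.initBound - X * M)]
  have h3 : 4 / S.alpha ^ 3 * (1 / S.wsig a r' - 1 / S.wsig t r') * S.corrBound M ^ 2 ≤
      4 / S.alpha ^ 3 * (S.alpha * S.m) *
        (2 * ((3 / 2 * S.initBound) ^ 2 + (X * M) ^ 2)) := by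
    gcongr
  have h4 : 4 / S.alpha ^ 3 * (S.alpha * S.m) *
        (2 * ((3 / 2 * S.initBound) ^ 2 + (X * M) ^ 2)) =
      18 * S.m / S.alpha ^ 2 * S.initBound ^ 2 + 8 * S.m / S.alpha ^ 2 * X ^ 2 * M ^ 2 := by
    field_simp; ring
  have h5 := mul_le_mul_of_nonneg_right hp.late_cross (sq_nonneg M)
  have h6 := h.learnable r i hi j hj
  rw [← hX] at h5
  rw [← hM] at h6
  linarith [hp.late_init]

theorem LateBounds.corr_bounds {a t : ℕ} {r' : Fin S.m} (h : S.LateBounds a r' t)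
    (hdyn : S.ATDyn) (hE : S.EventE) (hp : S.ParamBounds) (hat : a ≤ t) (ht : t ≤ S.T + 1)
    (ha : 1 / (S.alpha * S.m) < S.wsig a r') (r : Fin S.m) {i : Fin S.N} {j : Fin S.P}
    (hj : j ≠ S.sig i) :
    |dot (S.w t r) (S.x i j)| ≤
        S.corrBound (S.rhoMaxSU t) + 3 / 2 * S.noiseSq * S.rho i j r t ∧
      S.noiseSq * S.rho i j r t / 2 - S.corrBound (S.rhoMaxSU t) ≤
        S.y i * dot (S.w t r) (S.x i j) ∧
      (i ∈ S.SL → |dot (S.w t r) (S.x i j)| ≤ S.corrBound (S.rhoMaxSU t)) :=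
  corr_bounds_of_levels hdyn hE hp (S.rhoMaxSU_nonneg t) (h.rhoMaxSU_le_coefCap hp ht)
    (fun r _ hk _ hq => h.learnable_le hdyn hp hat ha r hk hq)
    (fun r _ hk _ hq => S.rho_le_rhoMaxSU t r hk hq) hj r

/-- A memorized unlearnable sample has a margin above `2 log T`, so its gradient weight is
at most `T⁻²`. -/
theorem psi_le_of_memorized (hp : S.ParamBounds) {t : ℕ} {k : Fin S.N} (hk : k ∈ S.SU) {V : ℝ}
    (hV : 0 ≤ V) (hV1 : V ≤ 1) (hcube : S.m * S.P * V ^ 3 ≤ 1 / 2)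
    (hlow : ∀ r p, p ≠ S.sig k → -V ≤ S.y k * dot (S.w t r) (S.x k p))
    {r : Fin S.m} {q : Fin S.P} (hq : q ≠ S.sig k)
    (hlarge : 4 * S.satScale - V ≤ S.y k * dot (S.w t r) (S.x k q)) :
    psi (S.marg t k) ≤ 1 / (S.T : ℝ) ^ 2 := by
  have hs := hp.one_le_satScale
  set F : Fin S.m → Fin S.P → ℝ := fun r p => (S.y k * dot (S.w t r) (S.x k p)) ^ 3 with hF
  have hlow3 : ∀ r p, p ≠ S.sig k → 0 ≤ F r p + V ^ 3 := by
    intro r p hpk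
    have := (Odd.strictMono_pow (R := ℝ) (n := 3) (by decide)).monotone (hlow r p hpk)
    simp only [Odd.neg_pow (show Odd 3 by decide)] at this
    simp only [hF]
    linarith
  have h1 : F r q + V ^ 3 ≤ ∑ r, ∑ p ∈ univ.erase (S.sig k), (F r p + V ^ 3) := by
    refine le_trans ?_ (single_le_sum (f := fun r => ∑ p ∈ univ.erase (S.sig k), (F r p + V ^ 3))
      (fun r _ => sum_nonneg fun p hp => hlow3 r p (ne_of_mem_erase hp)) (mem_univ r))
    exact single_le_sum (f := fun p => F r p + V ^ 3)
      (fun p hp => hlow3 r p (ne_of_mem_erase hp)) (mem_erase.mpr ⟨hq, mem_univ q⟩)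
  have h2 : ∑ r, ∑ p ∈ univ.erase (S.sig k), (F r p + V ^ 3) =
      S.marg t k + S.m * ((univ.erase (S.sig k)).card * V ^ 3) := by
    rw [S.marg_eq_unlearnable t hk]
    simp only [sum_add_distrib, sum_const, card_univ, Fintype.card_fin, nsmul_eq_mul, hF]
  have h3 : S.m * ((univ.erase (S.sig k)).card * V ^ 3) ≤ 1 / 2 := by
    have h2 : ((univ.erase (S.sig k)).card : ℝ) ≤ S.P := by
      exact_mod_cast (card_le_univ _).trans_eq (Fintype.card_fin _)
    have : S.m * ((univ.erase (S.sig k)).card * V ^ 3) ≤ S.m * (S.P * V ^ 3) := by gcongr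
    linarith
  have h4 : (3 * S.satScale) ^ 3 ≤ F r q := by
    simp only [hF]
    exact (Odd.strictMono_pow (R := ℝ) (n := 3) (by decide)).monotone (by linarith)
  have h5 : 2 * Real.log S.T ≤ S.marg t k := by
    have h6 : 1 ≤ S.satScale ^ 3 := one_le_pow₀ hs
    have h7 : 0 ≤ V ^ 3 := by positivity
    rw [← hp.satScale_pow]
    rw [mul_pow] at h4
    linarith
  have hT : (0 : ℝ) < S.T := by
    have := hp.two_le_T
    exact_mod_cast (by omega : 0 < S.T)
  calc psi (S.marg t k) ≤ Real.exp (-S.marg t k) := psi_le_exp_neg _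
    _ ≤ Real.exp (-(2 * Real.log S.T)) := Real.exp_le_exp.mpr (by linarith)
    _ = 1 / (S.T : ℝ) ^ 2 := by
        rw [Real.exp_neg, two_mul, Real.exp_add, Real.exp_log hT, one_div, sq]

theorem LateBounds.succ {a t : ℕ} {r' : Fin S.m} (h : S.LateBounds a r' t)
    (hdyn : S.ATDyn) (hE : S.EventE) (hp : S.ParamBounds) (hat : a ≤ t) (ht : t ≤ S.T + 1)
    (ha : 1 / (S.alpha * S.m) < S.wsig a r') : S.LateBounds a r' (t + 1) := by
  have hα := S.halpha
  have hη := S.heta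
  have hm := S.one_le_m
  have hs := hp.one_le_satScale
  have hb := S.noiseSq_pos
  have hstep := S.step_pos
  have hM0 := S.rhoMaxSU_nonneg t
  have hMc := h.rhoMaxSU_le_coefCap hp ht
  have hV0 := S.corrBound_nonneg hM0
  have hV1 := hp.corrBound_le_one hM0 hMc
  have hcube := hp.corrBound_cube_le hM0 hMc
  have hcorr := fun r i j hj => h.corr_bounds hdyn hE hp hat ht ha r (i := i) (j := j) hj
  set V := S.corrBound (S.rhoMaxSU t) with hV
  have hlow : ∀ i r p, p ≠ S.sig i → -V ≤ S.y i * dot (S.w t r) (S.x i p) := by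
    intro i r p hpi
    have := (hcorr r i p hpi).2.1
    have := mul_nonneg hb.le (S.rho_nonneg i p r t)
    linarith
  have hwa : 0 < S.wsig a r' := lt_trans (by positivity) ha
  have hwt : 0 < S.wsig t r' := hwa.trans_le (wsig_mono hdyn r' hat)
  constructor
  · intro r i hi j hj
    have hsum := sum_psi_le hdyn hE hp (t := t)
      (fun i _ => noise_margin_lower hV0 hcube (hlow i)) hwt
    have hpsi : (3 * S.eta / S.N) * psi (S.marg t i) ≤
        4 / S.alpha ^ 3 * (1 / S.wsig t r' - 1 / S.wsig (t + 1) r') :=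
      (mul_le_mul_of_nonneg_left (single_le_sum (f := fun i => psi (S.marg t i))
        (fun i _ => (psi_pos _).le) hi) hstep.le).trans hsum
    have hψ := psi_pos (S.marg t i)
    have hdot := abs_le.mp ((hcorr r i j hj).2.2 hi)
    have hsq : (dot (S.w t r) (S.x i j)) ^ 2 ≤ V ^ 2 := sq_le_sq' hdot.1 hdot.2
    have h1 : (3 * S.eta / S.N) * psi (S.marg t i) * (dot (S.w t r) (S.x i j)) ^ 2 ≤
        4 / S.alpha ^ 3 * (1 / S.wsig t r' - 1 / S.wsig (t + 1) r') * V ^ 2 := by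
      have : 0 ≤ 3 * S.eta / S.N * psi (S.marg t i) := by positivity
      gcongr
      exact this.trans hpsi
    have h2 : S.rho i j r (t + 1) ≤ S.baseCoef / 10 +
        4 / S.alpha ^ 3 * (1 / S.wsig a r' - 1 / S.wsig (t + 1) r') * V ^ 2 := by
      have := h.learnable r i hi j hj
      rw [← hV] at this
      rw [rho_succ]
      linarith
    refine h2.trans ?_
    have h3 : 1 / S.wsig (t + 1) r' ≤ 1 / S.wsig a r' :=
      one_div_le_one_div_of_le hwa (wsig_mono hdyn r' (by omega))
    have h4 : V ≤ S.corrBound (S.rhoMaxSU (t + 1)) := S.corrBound_mono (S.rhoMaxSU_le_succ t)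
    have h5 : 0 ≤ 1 / S.wsig a r' - 1 / S.wsig (t + 1) r' := by linarith
    gcongr
  · intro r k hk q hq
    have hN : (1 : ℝ) ≤ S.N := by exact_mod_cast S.hN
    have hTpos : (0 : ℝ) < S.T + 1 := by positivity
    have hT2 : (2 : ℝ) ≤ S.T := by exact_mod_cast hp.two_le_T
    have hρ := S.rho_nonneg k q r t
    have hρM : S.noiseSq * S.rho k q r t ≤ 10 * S.satScale := by
      have h1 := (S.rho_le_rhoMaxSU t r hk hq).trans hMc
      unfold coefCap at h1
      rw [le_div_iff₀ hb] at h1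
      linarith
    have hdot : (dot (S.w t r) (S.x k q)) ^ 2 ≤ (16 * S.satScale) ^ 2 := by
      have h1 : |dot (S.w t r) (S.x k q)| ≤ 16 * S.satScale := by
        have := (hcorr r k q hq).1
        linarith
      exact sq_le_sq' (abs_le.mp h1).1 (abs_le.mp h1).2
    have hstep' : 3 * S.eta / S.N ≤ 3 * S.eta := div_le_self (by positivity) hN
    have hinc : ∀ c, 0 ≤ c → psi (S.marg t k) ≤ c →
        S.noiseSq * ((3 * S.eta / S.N) * psi (S.marg t k) * (dot (S.w t r) (S.x k q)) ^ 2) ≤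
          c * S.satScale := by
      intro c hc hψc
      have hψ := psi_pos (S.marg t k)
      calc _ ≤ S.noiseSq * ((3 * S.eta) * c * (16 * S.satScale) ^ 2) := by gcongr
        _ = (768 * (S.eta * S.noiseSq) * S.satScale) * (c * S.satScale) := by ring
        _ ≤ 1 * (c * S.satScale) := by
            gcongr
            exact hp.noise_step
        _ = c * S.satScale := one_mul _
    rw [rho_succ, mul_add]
    push_cast
    by_cases hcase : S.noiseSq * S.rho k q r t ≤ 8 * S.satScale
    · have h1 := hinc 1 zero_le_one (psi_le_one _)
      have h2 : 0 ≤ ((t : ℝ) + 1) / (S.T + 1) * S.satScale := by positivity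
      linarith
    · push Not at hcase
      have hψ := psi_le_of_memorized hp hk hV0 hV1 hcube (hlow k) hq
        (r := r) (by linarith [(hcorr r k q hq).2.1])
      have h1 := hinc _ (by positivity) hψ
      have h2 : 1 / (S.T : ℝ) ^ 2 ≤ 1 / (S.T + 1) :=
        one_div_le_one_div_of_le hTpos (by nlinarith)
      have h3 := mul_le_mul_of_nonneg_right h2 (by linarith : 0 ≤ S.satScale)
      have h4 := h.unlearnable r k hk q hq
      rw [add_div, add_mul]
      linarith

/-- Noise stability from the numerical consequences of the parameter constraints. -/
theorem noise_stability (hdyn : S.ATDyn) (hE : S.EventE) (hp : S.ParamBounds) {t : ℕ}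
    (ht : t ≤ S.T + 1) (r : Fin S.m) {i : Fin S.N} (hi : i ∈ S.SL) {j : Fin S.P}
    (hj : j ≠ S.sig i) :
    S.rho i j r t ≤ S.baseCoef + S.quadCoef * S.rhoMaxSU t ^ 2 ∧
      |dot (S.w t r) (S.x i j)| ≤ S.corrBound S.coefCap := by
  have hbase := S.baseCoef_pos
  have hs := hp.one_le_satScale
  by_cases hall : ∀ s < t, ∀ r, S.wsig s r ≤ 1 / (S.alpha * S.m)
  · have hsmall := rho_le_of_early hdyn hE hp ⟨i, hi⟩ t hall
    constructor
    · have := mul_nonneg hp.quadCoef_nonneg (sq_nonneg (S.rhoMaxSU t))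
      linarith [hsmall i j r hj]
    · exact (corr_le_of_small hdyn hE hp hsmall hj r).trans
        (S.initBound_le_corrBound hp.coefCap_nonneg)
  · have hex : ∃ s, ¬ ∀ r, S.wsig s r ≤ 1 / (S.alpha * S.m) := by
      push Not at hall ⊢
      obtain ⟨s, -, r, h⟩ := hall
      exact ⟨s, r, h⟩
    classical
    obtain ⟨a, hspec, hmin⟩ : ∃ a, (¬ ∀ r, S.wsig a r ≤ 1 / (S.alpha * S.m)) ∧
        ∀ s < a, ∀ r, S.wsig s r ≤ 1 / (S.alpha * S.m) :=
      ⟨Nat.find hex, Nat.find_spec hex, fun s hs => not_not.mp (Nat.find_min hex hs)⟩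
    have hat : a ≤ t := by
      by_contra! hta
      exact hall fun s hs => hmin s (hs.trans hta)
    push Not at hspec
    obtain ⟨r', ha⟩ := hspec
    have hsmall := rho_le_of_early hdyn hE hp ⟨i, hi⟩ a hmin
    have hlate : ∀ n, a ≤ n → n ≤ S.T + 1 → S.LateBounds a r' n := by
      intro n han
      induction n, han using Nat.le_induction with
      | base =>
        intro _
        constructor
        · intro r i _ j hj
          simpa using hsmall i j r hj
        · intro r k _ q hq
          have h1 := mul_le_mul_of_nonneg_left (hsmall k q r hq) S.noiseSq_pos.le
          have h2 : 0 ≤ (a : ℝ) / (S.T + 1) * S.satScale := by positivity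
          linarith [hp.base_le]
      | succ n han ih =>
        intro hn
        exact (ih (by omega)).succ hdyn hE hp han (by omega) ha
    have h := hlate t hat ht
    exact ⟨h.learnable_le hdyn hp hat ha r hi hj,
      ((h.corr_bounds hdyn hE hp hat ht ha r hj).2.2 hi).trans
        (S.corrBound_mono (h.rhoMaxSU_le_coefCap hp ht))⟩

/-- The logarithmic factor `log(TNmP/δ)`. -/
def logScale (S : Setting) : ℝ := Real.log ((S.T : ℝ) * S.N * S.m * S.P / S.delta)

/-- The parameter constraints cleared of denominators. -/
structure ScaleBounds (S : Setting) : Prop where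
  two_le_T : 2 ≤ S.T
  one_le_log_T : 1 ≤ Real.log S.T
  log_T_le : Real.log S.T ≤ S.logScale
  four_le_log_init : 4 ≤ Real.log ((16 : ℝ) * S.N * S.m * S.P / S.delta)
  log_init_le : Real.log ((16 : ℝ) * S.N * S.m * S.P / S.delta) ≤ S.logScale
  one_le_log_cross : 1 ≤ Real.log ((16 : ℝ) * S.N ^ 2 * S.P ^ 2 / S.delta)
  log_cross_le : Real.log ((16 : ℝ) * S.N ^ 2 * S.P ^ 2 / S.delta) ≤ 2 * S.logScale
  log_signal_le : Real.log ((16 : ℝ) * S.m / S.delta) ≤ S.logScale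
  dim : 10 ^ 4 * (S.m * S.P * S.N * S.logScale ^ 2) ≤ Real.sqrt S.d
  init_noise : 10 ^ 8 * (S.sigma0 * S.sigman * S.m ^ 2 * S.d * S.logScale) ≤ 1
  init_signal :
    10 ^ 8 * (S.sigma0 * (S.alpha * (S.m : ℝ) ^ ((2 : ℝ) / 3)) * S.logScale) ≤ 1
  rate_noise : 10 ^ 8 * (S.eta * (S.sigman ^ 2 * S.d) * S.logScale) ≤ 1
  rate_signal : 10 ^ 8 * (S.eta * S.alpha ^ 2 * S.logScale) ≤ 1
  signal_cube : (10 ^ 8 * (S.sigman * Real.sqrt S.d * S.logScale)) ^ 3 ≤ S.alpha ^ 3 * S.SL.card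
  signal_sq : (10 ^ 8 * (S.sigman * Real.sqrt S.d * S.logScale)) ^ 2 ≤ S.alpha ^ 2 * S.N
  card_SU_le_log : 10 ^ 8 * (S.SU.card : ℝ) ≤ 2 * S.logScale
  card_SU_mul_P_le : (S.SU.card : ℝ) * S.P ≤ S.SU.card * S.N
  two_le_P : (2 : ℝ) ≤ S.P
  P_le : (S.P : ℝ) ≤ 10 ^ 8
  eps_le : S.eps ≤ S.alpha / 10 ^ 8

theorem mul_le_one_of_le_inv_div {c x a l : ℝ} (hc : 0 < c) (ha : 0 < a) (hl : 0 < l)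
    (h : x ≤ c⁻¹ * (1 / a) / l) : c * (x * a * l) ≤ 1 := by
  have h1 : c⁻¹ * (1 / a) / l = 1 / (c * (a * l)) := by field_simp
  rw [h1, le_div_iff₀ (by positivity)] at h
  linarith

set_option maxHeartbeats 1600000 in
theorem scaleBounds_of_condH (hH : S.CondH (10 ^ 8))
    (hsparse : S.SU.Nonempty → S.SparseRegime (10 ^ 8)) (hSL : S.SL.Nonempty) :
    S.ScaleBounds := by
  obtain ⟨-, hT, hdim, hsig, hσ0, hηle, -, heps, hm, -, hP2, hPC⟩ := hH
  have hσ := S.hsigma0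
  have hσn := S.hsigman
  have hη := S.heta
  have hα := S.halpha
  have hδ := S.hdelta0
  have hδ1 := S.hdelta1
  have hN1 : (1 : ℝ) ≤ S.N := by exact_mod_cast S.hN
  have hm1 := S.one_le_m
  have hd1 : (1 : ℝ) ≤ S.d := by exact_mod_cast S.hd
  have hP : (2 : ℝ) ≤ S.P := by exact_mod_cast hP2
  have hD1 : 1 ≤ Real.sqrt S.d := Real.one_le_sqrt.mpr hd1
  have hDsq : Real.sqrt S.d ^ 2 = S.d := Real.sq_sqrt (by linarith)
  have hTpos : (0 : ℝ) < S.T := lt_of_lt_of_le (by positivity) hT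
  have hT1 : (1 : ℝ) ≤ S.T := by
    have : 0 < S.T := by exact_mod_cast hTpos
    exact_mod_cast this
  have hinv : 1 ≤ 1 / S.delta := by rw [le_div_iff₀ hδ]; linarith
  have hNP : (2 : ℝ) ≤ S.N * S.P / S.delta := by
    rw [le_div_iff₀ hδ]
    calc 2 * S.delta ≤ 1 * 2 := by linarith
      _ ≤ S.N * S.P := by gcongr
  have hlog2 : (1 : ℝ) / 2 ≤ Real.log 2 := by linarith [Real.log_two_gt_d9]
  have hL2' : (2 : ℝ) ≤ S.T * S.N * S.m * S.P / S.delta := by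
    have h1 : (S.T : ℝ) * S.N * S.m * S.P / S.delta = S.T * S.m * (S.N * S.P / S.delta) := by ring
    have h2 : (1 : ℝ) ≤ S.T * S.m := one_le_mul_of_one_le_of_one_le hT1 hm1
    rw [h1]
    exact hNP.trans (le_mul_of_one_le_left (by positivity) h2)
  have hLhalf : 1 / 2 ≤ S.logScale := hlog2.trans (Real.log_le_log (by norm_num) hL2')
  have hL0 : 0 < S.logScale := by linarith
  have hLd : S.logScale ≤ Real.log ((S.T : ℝ) * S.d * S.N * S.m * S.P / S.delta) := by
    refine Real.log_le_log (by linarith) ?_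
    have h1 : (S.T : ℝ) * S.d * S.N * S.m * S.P / S.delta =
        S.d * (S.T * S.N * S.m * S.P / S.delta) := by ring
    rw [h1]
    exact le_mul_of_one_le_left (by positivity) hd1
  have hLd0 := hL0.trans_le hLd
  -- initialization scale
  have hinit : 10 ^ 8 * (S.sigma0 * (S.sigman * S.m ^ 2 * Real.sqrt S.P * S.d) *
      Real.log ((S.T : ℝ) * S.d * S.N * S.m * S.P / S.delta)) ≤ 1 := by
    refine mul_le_one_of_le_inv_div (by norm_num) (by positivity) hLd0 (hσ0.trans ?_)
    gcongr
    exact min_le_right _ _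
  have hsqP : 1 ≤ Real.sqrt S.P := Real.one_le_sqrt.mpr (by linarith)
  have hinit_noise : 10 ^ 8 * (S.sigma0 * S.sigman * S.m ^ 2 * S.d * S.logScale) ≤ 1 := by
    refine le_trans ?_ hinit
    have h1 : S.sigma0 * S.sigman * S.m ^ 2 * S.d * S.logScale =
        S.sigma0 * (S.sigman * S.m ^ 2 * 1 * S.d) * S.logScale := by ring
    rw [h1]
    gcongr
  have hinit_signal :
      10 ^ 8 * (S.sigma0 * (S.alpha * (S.m : ℝ) ^ ((2 : ℝ) / 3)) * S.logScale) ≤ 1 := by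
    have h1 : 10 ^ 8 * (S.sigma0 * (S.alpha * (S.m : ℝ) ^ ((2 : ℝ) / 3)) *
        Real.log ((S.T : ℝ) * S.d * S.N * S.m * S.P / S.delta)) ≤ 1 := by
      refine mul_le_one_of_le_inv_div (by norm_num) (by positivity) hLd0 (hσ0.trans ?_)
      gcongr
      exact (min_le_left _ _).trans (min_le_right _ _)
    refine le_trans ?_ h1
    gcongr
  -- learning rate
  have hrate_noise : 10 ^ 8 * (S.eta * (S.sigman ^ 2 * S.d) * S.logScale) ≤ 1 := by
    refine mul_le_one_of_le_inv_div (by norm_num) (by positivity) hL0 (hηle.trans ?_)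
    unfold logScale
    gcongr
    exact (min_le_left _ _).trans (min_le_right _ _)
  have hrate_signal : 10 ^ 8 * (S.eta * S.alpha ^ 2 * S.logScale) ≤ 1 := by
    refine mul_le_one_of_le_inv_div (by norm_num) (by positivity) hL0 (hηle.trans ?_)
    unfold logScale
    gcongr
    exact min_le_right _ _
  -- training horizon
  have hTd : 10 ^ 8 * Real.sqrt S.d ≤ S.T := by
    rw [div_le_iff₀ (by positivity)] at hT
    have h1 : S.eta * (S.sigman ^ 2 * S.d) ≤ 1 := by
      have h3 : S.eta * (S.sigman ^ 2 * S.d) * (1 / 2) ≤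
          S.eta * (S.sigman ^ 2 * S.d) * S.logScale := by gcongr
      have h4 : 0 ≤ S.eta * (S.sigman ^ 2 * S.d) := by positivity
      linarith
    have h2 : S.sigma0 * S.sigman * S.d ≤ 1 := by
      have h3 : S.sigma0 * S.sigman * S.d * (1 * (1 / 2)) ≤
          S.sigma0 * S.sigman * S.d * ((S.m : ℝ) ^ 2 * S.logScale) := by
        gcongr
        exact one_le_pow₀ hm1
      have h4 : S.sigma0 * S.sigman * S.m ^ 2 * S.d * S.logScale =
          S.sigma0 * S.sigman * S.d * ((S.m : ℝ) ^ 2 * S.logScale) := by ring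
      have h5 : 0 ≤ S.sigma0 * S.sigman * S.d := by positivity
      rw [h4] at hinit_noise
      linarith
    have h4 : S.eta * S.sigma0 * S.sigman ^ 3 * (S.d * Real.sqrt S.d) * Real.sqrt S.d ≤ 1 := by
      calc _ = (S.eta * (S.sigman ^ 2 * S.d)) * (S.sigma0 * S.sigman * Real.sqrt S.d ^ 2) := by
            ring
        _ = (S.eta * (S.sigman ^ 2 * S.d)) * (S.sigma0 * S.sigman * S.d) := by rw [hDsq]
        _ ≤ 1 * 1 := by gcongr
        _ = 1 := one_mul 1
    calc (10 : ℝ) ^ 8 * Real.sqrt S.d ≤ 10 ^ 8 * S.N * Real.sqrt S.d := by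
          gcongr
          exact le_mul_of_one_le_right (by norm_num) hN1
      _ ≤ S.T * (S.eta * S.sigma0 * S.sigman ^ 3 * (S.d * Real.sqrt S.d)) * Real.sqrt S.d := by
          gcongr
      _ = S.T * (S.eta * S.sigma0 * S.sigman ^ 3 * (S.d * Real.sqrt S.d) * Real.sqrt S.d) := by
          ring
      _ ≤ S.T * 1 := by gcongr
      _ = S.T := mul_one _
  have hT16 : (16 : ℝ) ≤ S.T := by linarith
  have hlogT : 1 ≤ Real.log S.T := by
    rw [Real.le_log_iff_exp_le hTpos]
    linarith [Real.exp_one_lt_d9]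
  have hTnat : 2 ≤ S.T := by
    have : (2 : ℝ) ≤ S.T := by linarith
    exact_mod_cast this
  have hlogTL : Real.log S.T ≤ S.logScale := by
    refine Real.log_le_log hTpos ?_
    have h1 : (S.T : ℝ) * S.N * S.m * S.P / S.delta = S.T * (S.m * (S.N * S.P / S.delta)) := by
      ring
    rw [h1]
    exact le_mul_of_one_le_right hTpos.le
      (one_le_mul_of_one_le_of_one_le hm1 (by linarith))
  have hlogd : Real.log S.d ≤ 2 * S.logScale := by
    have h1 : Real.log S.d ≤ Real.log ((S.T : ℝ) ^ 2) := by
      refine Real.log_le_log (by linarith) ?_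
      rw [← hDsq]
      exact pow_le_pow_left₀ (by positivity) (by linarith) 2
    rw [Real.log_pow] at h1
    push_cast at h1
    linarith
  -- width
  have hm7 : (10 : ℝ) ^ 7 ≤ S.m := by
    have h1 : (1 : ℝ) / 2 ≤ Real.log (S.N * S.P / S.delta) :=
      hlog2.trans (Real.log_le_log (by norm_num) hNP)
    linarith
  have hexp4 : Real.exp 4 ≤ 81 := by
    have h1 : Real.exp 4 = Real.exp 1 ^ 4 := by rw [← Real.exp_nat_mul]; norm_num
    rw [h1]
    calc Real.exp 1 ^ 4 ≤ 3 ^ 4 :=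
          pow_le_pow_left₀ (Real.exp_pos 1).le (by linarith [Real.exp_one_lt_d9]) 4
      _ = 81 := by norm_num
  have hlog_init_eq : (16 : ℝ) * S.N * S.m * S.P / S.delta = 16 * (S.m * (S.N * S.P / S.delta)) := by
    ring
  have hinit4 : 4 ≤ Real.log ((16 : ℝ) * S.N * S.m * S.P / S.delta) := by
    rw [hlog_init_eq, Real.le_log_iff_exp_le (by positivity)]
    have h1 : (S.m : ℝ) ≤ S.m * (S.N * S.P / S.delta) :=
      le_mul_of_one_le_right (by positivity) (by linarith)
    linarith
  have hinitL : Real.log ((16 : ℝ) * S.N * S.m * S.P / S.delta) ≤ S.logScale := by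
    refine Real.log_le_log (by positivity) ?_
    gcongr
  have hcross1 : 1 ≤ Real.log ((16 : ℝ) * S.N ^ 2 * S.P ^ 2 / S.delta) := by
    have h1 : (16 : ℝ) * S.N ^ 2 * S.P ^ 2 / S.delta = 16 * (S.N * S.P) * (S.N * S.P / S.delta) := by
      ring
    rw [h1, Real.le_log_iff_exp_le (by positivity)]
    have h2 : (1 : ℝ) ≤ S.N * S.P := one_le_mul_of_one_le_of_one_le hN1 (by linarith)
    have h4 : 16 * 1 * 2 ≤ 16 * (S.N * S.P) * (S.N * S.P / S.delta) := by gcongr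
    linarith [Real.exp_one_lt_d9]
  have hcrossL : Real.log ((16 : ℝ) * S.N ^ 2 * S.P ^ 2 / S.delta) ≤ 2 * S.logScale := by
    have h1 : 2 * S.logScale = Real.log (((S.T : ℝ) * S.N * S.m * S.P / S.delta) ^ 2) := by
      rw [Real.log_pow]; rfl
    rw [h1]
    refine Real.log_le_log (by positivity) ?_
    have h2 : ((S.T : ℝ) * S.N * S.m * S.P / S.delta) ^ 2 =
        (S.T ^ 2 * S.m ^ 2 * (1 / S.delta)) * (S.N ^ 2 * S.P ^ 2 / S.delta) := by
      field_simp
    have h3 : (16 : ℝ) ≤ S.T ^ 2 * S.m ^ 2 * (1 / S.delta) := by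
      have h4 : (16 : ℝ) ≤ S.T ^ 2 := by
        calc (16 : ℝ) = 4 ^ 2 := by norm_num
          _ ≤ S.T ^ 2 := pow_le_pow_left₀ (by norm_num) (by linarith) 2
      have h5 : (1 : ℝ) ≤ (S.m : ℝ) ^ 2 := one_le_pow₀ hm1
      calc (16 : ℝ) = 16 * 1 * 1 := by norm_num
        _ ≤ _ := by gcongr
    rw [h2, mul_assoc, mul_div_assoc]
    gcongr
  have hsignalL : Real.log ((16 : ℝ) * S.m / S.delta) ≤ S.logScale := by
    refine Real.log_le_log (by positivity) ?_
    have h1 : (16 : ℝ) * S.m ≤ S.T * S.N * S.m * S.P := by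
      calc (16 : ℝ) * S.m = 16 * 1 * S.m * 1 := by ring
        _ ≤ S.T * S.N * S.m * S.P := by gcongr; linarith
    gcongr
  have hL1 : 1 ≤ S.logScale := by linarith
  -- dimension
  have hdim' : 10 ^ 4 * (S.m * S.P * S.N * S.logScale ^ 2) ≤ Real.sqrt S.d := by
    refine Real.le_sqrt_of_sq_le (le_trans (le_of_eq ?_) hdim)
    unfold logScale
    ring
  -- signal strength
  have hn : (1 : ℝ) ≤ S.SL.card := by exact_mod_cast hSL.card_pos
  have hcard : (S.SL.card : ℝ) + S.SU.card = S.N := by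
    have h1 := card_union_of_disjoint S.hdisj
    rw [S.hunion, card_univ, Fintype.card_fin] at h1
    exact_mod_cast h1.symm
  have hfrac : (S.N : ℝ) * (1 - S.pun) = S.SL.card := by
    unfold pun
    have : (S.N : ℝ) ≠ 0 := by positivity
    field_simp
    linarith
  rw [hfrac] at hsig
  set g : ℝ := (S.SL.card : ℝ) ^ ((1 : ℝ) / 3) with hg
  have hg1 : 1 ≤ g := Real.one_le_rpow hn (by norm_num)
  have hg3 : g ^ 3 = S.SL.card := by
    rw [hg, ← Real.rpow_natCast, ← Real.rpow_mul (by positivity)]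
    norm_num
  have hg2 : g ^ 2 ≤ S.N := by
    have h1 : g ^ 2 ≤ g ^ 3 := pow_le_pow_right₀ hg1 (by norm_num)
    have h2 : (0 : ℝ) ≤ S.SU.card := by positivity
    linarith
  have hsig' : 10 ^ 8 * (S.sigman * Real.sqrt S.d * S.logScale) ≤ S.alpha * g := by
    rw [div_le_iff₀ (by linarith)] at hsig
    unfold logScale
    linarith
  have hcube : (10 ^ 8 * (S.sigman * Real.sqrt S.d * S.logScale)) ^ 3 ≤
      S.alpha ^ 3 * S.SL.card := by
    rw [← hg3, ← mul_pow]
    gcongr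
  have hsq : (10 ^ 8 * (S.sigman * Real.sqrt S.d * S.logScale)) ^ 2 ≤ S.alpha ^ 2 * S.N := by
    calc _ ≤ (S.alpha * g) ^ 2 := by gcongr
      _ = S.alpha ^ 2 * g ^ 2 := mul_pow _ _ _
      _ ≤ _ := by gcongr
  -- unlearnable fraction
  have hSU : 10 ^ 8 * (S.SU.card : ℝ) ≤ 2 * S.logScale ∧
      (S.SU.card : ℝ) * S.P ≤ S.SU.card * S.N := by
    rcases S.SU.eq_empty_or_nonempty with h | h
    · rw [h]; simp; exact hL0.le
    · obtain ⟨-, h1, h2⟩ := hsparse h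
      constructor
      · unfold pun at h1
        have h3 := (div_le_div_iff_of_pos_right (by positivity : (0 : ℝ) < S.N)).mp h1
        rw [inv_mul_eq_div, le_div_iff₀ (by norm_num)] at h3
        linarith
      · have h3 : (S.P : ℝ) ≤ S.N := by
          refine le_trans ?_ h2
          calc (S.P : ℝ) = 1 * 1 * S.P * 1 := by ring
            _ ≤ 10 ^ 8 * S.m * S.P *
                Real.log ((S.T : ℝ) * S.d * S.N * S.m * S.P / S.delta) := by
              gcongr
              · norm_num
              · exact hL1.trans hLd
        gcongr
  have heps' : S.eps ≤ S.alpha / 10 ^ 8 := by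
    refine heps.le.trans ?_
    rw [inv_mul_eq_div]
    gcongr
    exact min_le_left _ _
  exact ⟨hTnat, hlogT, hlogTL, hinit4, hinitL, hcross1, hcrossL, hsignalL, hdim', hinit_noise,
    hinit_signal, hrate_noise, hrate_signal, hcube, hsq, hSU.1, hSU.2, hP, hPC, heps'⟩

theorem mul_add_le_of_dominated {s σ D A B l N P n M : ℝ} (hs : 0 < s) (hσ : 0 < σ) (hD : 0 < D)
    (hA : 2 ≤ A) (hB : 1 ≤ B) (hl : 1 ≤ l) (hP : 2 ≤ P) (hn : 0 ≤ n) (hM : 0 ≤ M)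
    (hcross : 4 * (B * P * N) ≤ D) (hcap : M * (σ ^ 2 * D ^ 2) ≤ 10 * l) :
    (3 / 2 * (σ ^ 2 * D ^ 2) + 2 * σ ^ 2 * (D * B) * P * N) *
        (s / (σ * D) + n * σ ^ 2 * D / (100 * l ^ 2) * M ^ 2) ≤
      2 * s * σ * (D * A) / 2 + 2 * σ ^ 2 * (D * B) * P * n * M / 20 := by
  have h1 : 3 / 2 * (σ ^ 2 * D ^ 2) + 2 * σ ^ 2 * (D * B) * P * N ≤ 2 * (σ ^ 2 * D ^ 2) := by
    have h2 : σ ^ 2 * D * (4 * (B * P * N)) ≤ σ ^ 2 * D * D := by gcongr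
    linarith
  have hbase : 2 * (σ ^ 2 * D ^ 2) * (s / (σ * D)) ≤ 2 * s * σ * (D * A) / 2 := by
    calc 2 * (σ ^ 2 * D ^ 2) * (s / (σ * D)) = s * σ * D * 2 := by field_simp
      _ ≤ s * σ * D * A := by gcongr
      _ = 2 * s * σ * (D * A) / 2 := by ring
  have hquad : 2 * (σ ^ 2 * D ^ 2) * (n * σ ^ 2 * D / (100 * l ^ 2) * M ^ 2) ≤
      2 * σ ^ 2 * (D * B) * P * n * M / 20 := by
    calc 2 * (σ ^ 2 * D ^ 2) * (n * σ ^ 2 * D / (100 * l ^ 2) * M ^ 2)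
        = n * σ ^ 2 * D * M / (50 * l ^ 2) * (M * (σ ^ 2 * D ^ 2)) := by field_simp; ring
      _ ≤ n * σ ^ 2 * D * M / (50 * l ^ 2) * (10 * l) := by gcongr
      _ = n * σ ^ 2 * D * M / (5 * l) := by field_simp; ring
      _ ≤ n * σ ^ 2 * D * M / (5 * 1) := by gcongr
      _ = n * σ ^ 2 * D * M * (1 * 2) / 10 := by ring
      _ ≤ n * σ ^ 2 * D * M * (B * P) / 10 := by gcongr
      _ = 2 * σ ^ 2 * (D * B) * P * n * M / 20 := by ring
  calc _ ≤ 2 * (σ ^ 2 * D ^ 2) * (s / (σ * D) + n * σ ^ 2 * D / (100 * l ^ 2) * M ^ 2) := by gcongr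
    _ ≤ _ := by rw [mul_add]; linarith

theorem mul_cube_le_half {c V : ℝ} (hc : 1 ≤ c) (hV : 0 ≤ V) (h : c * V ≤ 1 / 2) :
    c * V ^ 3 ≤ 1 / 2 := by
  have h1 : V ≤ 1 := (le_mul_of_one_le_left hV hc).trans (h.trans (by norm_num))
  calc c * V ^ 3 = c * V * V ^ 2 := by ring
    _ ≤ 1 / 2 * 1 ^ 2 := by gcongr
    _ = 1 / 2 := by norm_num

theorem sqrt_dim_sq (S : Setting) : Real.sqrt S.d ^ 2 = S.d := Real.sq_sqrt (Nat.cast_nonneg _)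

theorem sqrt_dim_pos (S : Setting) : 0 < Real.sqrt S.d :=
  Real.sqrt_pos.mpr (by exact_mod_cast S.hd)

theorem initBound_eq (S : Setting) : S.initBound = 2 * S.sigma0 * S.sigman *
    (Real.sqrt S.d * Real.sqrt (Real.log ((16 : ℝ) * S.N * S.m * S.P / S.delta))) := by
  rw [initBound, Real.sqrt_mul (Nat.cast_nonneg _)]

theorem crossBound_eq (S : Setting) : S.crossBound = 2 * S.sigman ^ 2 *
    (Real.sqrt S.d * Real.sqrt (Real.log ((16 : ℝ) * S.N ^ 2 * S.P ^ 2 / S.delta))) := by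
  rw [crossBound, Real.sqrt_mul (Nat.cast_nonneg _)]

theorem noiseSq_eq (S : Setting) : S.noiseSq = S.sigman ^ 2 * Real.sqrt S.d ^ 2 := by
  rw [noiseSq, sqrt_dim_sq]

theorem pun_mul_N (S : Setting) : S.pun * S.N = S.SU.card := by
  have : (S.N : ℝ) ≠ 0 := by exact_mod_cast S.hN.ne'
  rw [pun, div_mul_cancel₀ _ this]

theorem corrBound_coefCap (S : Setting) : S.corrBound S.coefCap =
    3 * S.sigma0 * S.sigman *
        (Real.sqrt S.d * Real.sqrt (Real.log ((16 : ℝ) * S.N * S.m * S.P / S.delta))) +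
      21 * (S.pun * S.N) * S.P * S.satScale / Real.sqrt S.d *
        Real.sqrt (Real.log ((16 : ℝ) * S.N ^ 2 * S.P ^ 2 / S.delta)) := by
  have := S.hsigman.ne'
  have := S.sqrt_dim_pos.ne'
  rw [corrBound, coefCap, initBound_eq, crossBound_eq, noiseSq_eq, pun_mul_N]
  field_simp
  ring

theorem quadCoef_eq (S : Setting) (h : 0 ≤ Real.log S.T) :
    S.quadCoef = S.SU.card * S.sigman ^ 2 * Real.sqrt S.d / (100 * S.satScale ^ 2) := by
  have h1 : S.satScale ^ 2 = Real.log S.T ^ ((2 : ℝ) / 3) := by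
    rw [satScale, ← Real.rpow_natCast, ← Real.rpow_mul h]
    norm_num
  rw [quadCoef, pun_mul_N, h1]

namespace ScaleBounds

theorem one_le_logScale (h : S.ScaleBounds) : 1 ≤ S.logScale := h.one_le_log_T.trans h.log_T_le

theorem satScale_pow (h : S.ScaleBounds) : S.satScale ^ 3 = Real.log S.T := by
  rw [satScale, ← Real.rpow_natCast, ← Real.rpow_mul (by linarith [h.one_le_log_T])]
  norm_num

theorem one_le_satScale (h : S.ScaleBounds) : 1 ≤ S.satScale :=
  Real.one_le_rpow h.one_le_log_T (by norm_num)

theorem satScale_sq_le (h : S.ScaleBounds) : S.satScale ^ 2 ≤ S.logScale :=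
  (pow_le_pow_right₀ h.one_le_satScale (by norm_num)).trans (h.satScale_pow.trans_le h.log_T_le)

theorem satScale_le (h : S.ScaleBounds) : S.satScale ≤ S.logScale :=
  (le_self_pow₀ h.one_le_satScale (by norm_num)).trans h.satScale_sq_le

theorem sqrt_log_init_sq (h : S.ScaleBounds) :
    Real.sqrt (Real.log ((16 : ℝ) * S.N * S.m * S.P / S.delta)) ^ 2 ≤ S.logScale := by
  rw [Real.sq_sqrt (by linarith [h.four_le_log_init])]
  exact h.log_init_le

theorem two_le_sqrt_log_init (h : S.ScaleBounds) :
    2 ≤ Real.sqrt (Real.log ((16 : ℝ) * S.N * S.m * S.P / S.delta)) :=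
  Real.le_sqrt_of_sq_le (by linarith [h.four_le_log_init])

theorem sqrt_log_init_le (h : S.ScaleBounds) :
    Real.sqrt (Real.log ((16 : ℝ) * S.N * S.m * S.P / S.delta)) ≤ S.logScale :=
  (le_self_pow₀ (by linarith [h.two_le_sqrt_log_init]) (by norm_num)).trans h.sqrt_log_init_sq

theorem sqrt_log_cross_sq (h : S.ScaleBounds) :
    Real.sqrt (Real.log ((16 : ℝ) * S.N ^ 2 * S.P ^ 2 / S.delta)) ^ 2 ≤ 2 * S.logScale := by
  rw [Real.sq_sqrt (by linarith [h.one_le_log_cross])]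
  exact h.log_cross_le

theorem one_le_sqrt_log_cross (h : S.ScaleBounds) :
    1 ≤ Real.sqrt (Real.log ((16 : ℝ) * S.N ^ 2 * S.P ^ 2 / S.delta)) :=
  Real.one_le_sqrt.mpr h.one_le_log_cross

theorem sqrt_log_cross_le (h : S.ScaleBounds) :
    Real.sqrt (Real.log ((16 : ℝ) * S.N ^ 2 * S.P ^ 2 / S.delta)) ≤ 2 * S.logScale :=
  (le_self_pow₀ h.one_le_sqrt_log_cross (by norm_num)).trans h.sqrt_log_cross_sq

theorem satScale_mul_sqrt_log_cross_le (h : S.ScaleBounds) :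
    S.satScale * Real.sqrt (Real.log ((16 : ℝ) * S.N ^ 2 * S.P ^ 2 / S.delta)) ≤
      2 * S.logScale := by
  have hL := h.one_le_logScale
  have h1 := h.one_le_satScale
  refine le_of_sq_le_sq ?_ (by linarith)
  calc _ = S.satScale ^ 2 *
        Real.sqrt (Real.log ((16 : ℝ) * S.N ^ 2 * S.P ^ 2 / S.delta)) ^ 2 := mul_pow _ _ _
    _ ≤ S.logScale * (2 * S.logScale) := by
        gcongr
        · exact h.satScale_sq_le
        · exact h.sqrt_log_cross_sq
    _ ≤ (2 * S.logScale) ^ 2 := by nlinarith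

theorem patches_le_sqrt_dim (h : S.ScaleBounds) : (S.P : ℝ) ≤ Real.sqrt S.d := by
  have hm := S.one_le_m
  have hN : (1 : ℝ) ≤ S.N := by exact_mod_cast S.hN
  have hL := h.one_le_logScale
  refine le_trans ?_ h.dim
  calc (S.P : ℝ) = 1 * (1 * S.P * 1 * 1 ^ 2) := by ring
    _ ≤ 10 ^ 4 * (S.m * S.P * S.N * S.logScale ^ 2) := by gcongr; norm_num

theorem alpha_sq_lower (h : S.ScaleBounds) :
    10 ^ 20 * (S.sigman ^ 2 * Real.sqrt S.d * S.m * S.P * S.logScale ^ 4) ≤ S.alpha ^ 2 := by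
  have hN : (0 : ℝ) < S.N := by exact_mod_cast S.hN
  refine le_of_mul_le_mul_right ?_ hN
  refine le_trans ?_ h.signal_sq
  calc _ = 10 ^ 16 * (S.sigman ^ 2 * Real.sqrt S.d * S.logScale ^ 2) *
        (10 ^ 4 * (S.m * S.P * S.N * S.logScale ^ 2)) := by ring
    _ ≤ 10 ^ 16 * (S.sigman ^ 2 * Real.sqrt S.d * S.logScale ^ 2) * Real.sqrt S.d := by
        gcongr
        exact h.dim
    _ = _ := by ring

theorem absorb (h : S.ScaleBounds) {M : ℝ} (hM : 0 ≤ M) (hMc : M ≤ S.coefCap) :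
    (3 / 2 * S.noiseSq + S.crossBound * S.P * S.N) * (S.baseCoef + S.quadCoef * M ^ 2) ≤
      S.initBound / 2 + S.crossBound * S.P * S.SU.card * M / 20 := by
  have hL := h.one_le_logScale
  have hcap : M * (S.sigman ^ 2 * Real.sqrt S.d ^ 2) ≤ 10 * S.satScale := by
    rw [← noiseSq_eq, ← le_div_iff₀ S.noiseSq_pos]
    exact hMc
  rw [quadCoef_eq S (by linarith [h.one_le_log_T]), initBound_eq, crossBound_eq, noiseSq_eq,
    baseCoef]
  refine mul_add_le_of_dominated S.hsigma0 S.hsigman S.sqrt_dim_pos h.two_le_sqrt_log_init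
    h.one_le_sqrt_log_cross h.one_le_satScale h.two_le_P (by positivity) hM ?_ hcap
  refine le_trans ?_ h.dim
  calc _ ≤ 4 * (2 * S.logScale * S.P * S.N) := by gcongr; exact h.sqrt_log_cross_le
    _ = 8 * (1 * S.P * S.N * (S.logScale * 1)) := by ring
    _ ≤ 10 ^ 4 * (S.m * S.P * S.N * (S.logScale * S.logScale)) := by
        gcongr
        · norm_num
        · exact S.one_le_m
    _ = _ := by ring

theorem corr_cube (h : S.ScaleBounds) : S.m * S.P * S.corrBound S.coefCap ^ 3 ≤ 1 / 2 := by
  have hL := h.one_le_logScale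
  have hm := S.one_le_m
  have hP := h.two_le_P
  have hD := S.sqrt_dim_pos
  have hσ := S.hsigma0
  have hσn := S.hsigman
  have hl := h.one_le_satScale
  have hinit : S.m * S.P * (3 * S.sigma0 * S.sigman * (Real.sqrt S.d *
      Real.sqrt (Real.log ((16 : ℝ) * S.N * S.m * S.P / S.delta)))) ≤ 1 / 4 := by
    calc _ ≤ S.m * Real.sqrt S.d * (3 * S.sigma0 * S.sigman * (Real.sqrt S.d * S.logScale)) := by
          gcongr
          · exact h.patches_le_sqrt_dim
          · exact h.sqrt_log_init_le
      _ = 3 * (S.sigma0 * S.sigman * (S.m * 1) * Real.sqrt S.d ^ 2 * S.logScale) := by ring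
      _ ≤ 3 * (S.sigma0 * S.sigman * (S.m * S.m) * Real.sqrt S.d ^ 2 * S.logScale) := by gcongr
      _ = 3 * (S.sigma0 * S.sigman * S.m ^ 2 * S.d * S.logScale) := by rw [sqrt_dim_sq]; ring
      _ ≤ 1 / 4 := by linarith [h.init_noise]
  have hcross : S.m * S.P * (21 * (S.pun * S.N) * S.P * S.satScale / Real.sqrt S.d *
      Real.sqrt (Real.log ((16 : ℝ) * S.N ^ 2 * S.P ^ 2 / S.delta))) ≤ 1 / 4 := by
    have hU : (S.SU.card : ℝ) ≤ S.logScale := by linarith [h.card_SU_le_log]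
    rw [pun_mul_N]
    calc _ = 21 * (S.m * S.P) * (S.SU.card * S.P) * (S.satScale *
          Real.sqrt (Real.log ((16 : ℝ) * S.N ^ 2 * S.P ^ 2 / S.delta))) / Real.sqrt S.d := by ring
      _ ≤ 21 * (S.m * S.P) * (S.logScale * S.N) * (2 * S.logScale) / Real.sqrt S.d := by
          gcongr ?_ * ?_ * ?_ / ?_
          · exact h.card_SU_mul_P_le.trans (by gcongr)
          · exact h.satScale_mul_sqrt_log_cross_le
      _ ≤ 1 / 4 := by
          rw [div_le_iff₀ hD]
          have := h.dim
          have h0 : 0 ≤ S.m * S.P * S.N * S.logScale ^ 2 := by positivity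
          calc _ = 42 * (S.m * S.P * S.N * S.logScale ^ 2) := by ring
            _ ≤ _ := by linarith
  refine mul_cube_le_half (one_le_mul_of_one_le_of_one_le hm (by linarith)) ?_ ?_
  · rw [corrBound_coefCap, pun_mul_N]; positivity
  · rw [corrBound_coefCap, mul_add]; linarith

theorem late_init (h : S.ScaleBounds) :
    18 * S.m / S.alpha ^ 2 * S.initBound ^ 2 ≤ 9 / 10 * S.baseCoef := by
  have hL := h.one_le_logScale
  have hm := S.one_le_m
  have hP := h.two_le_P
  have hD := S.sqrt_dim_pos
  have hσ := S.hsigma0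
  have hσn := S.hsigman
  have hα := S.halpha
  have hkey : 80 * (S.m * S.sigma0 * S.sigman ^ 3 * Real.sqrt S.d ^ 3 * S.logScale) ≤
      S.alpha ^ 2 := by
    refine le_trans ?_ h.alpha_sq_lower
    have h1 : S.sigma0 * S.sigman * S.m ^ 2 * S.d * S.logScale ≤ 1 := by
      have h0 : 0 ≤ S.sigma0 * S.sigman * S.m ^ 2 * S.d * S.logScale := by positivity
      linarith [h.init_noise]
    calc _ = 80 * (S.sigman ^ 2 * Real.sqrt S.d) *
          (S.sigma0 * S.sigman * (S.m * 1) * Real.sqrt S.d ^ 2 * S.logScale) := by ring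
      _ ≤ 80 * (S.sigman ^ 2 * Real.sqrt S.d) *
          (S.sigma0 * S.sigman * (S.m * S.m) * Real.sqrt S.d ^ 2 * S.logScale) := by gcongr
      _ = 80 * (S.sigman ^ 2 * Real.sqrt S.d) *
          (S.sigma0 * S.sigman * S.m ^ 2 * S.d * S.logScale) := by rw [sqrt_dim_sq]; ring
      _ ≤ 80 * (S.sigman ^ 2 * Real.sqrt S.d) * 1 := by gcongr
      _ = 80 * (S.sigman ^ 2 * Real.sqrt S.d * 1 * 1 * 1 ^ 4) := by ring
      _ ≤ 10 ^ 20 * (S.sigman ^ 2 * Real.sqrt S.d * S.m * S.P * S.logScale ^ 4) := by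
          gcongr
          · norm_num
          · linarith
  calc 18 * S.m / S.alpha ^ 2 * S.initBound ^ 2
      = 72 * (S.m * S.sigma0 ^ 2 * S.sigman ^ 2 * Real.sqrt S.d ^ 2 *
        Real.sqrt (Real.log ((16 : ℝ) * S.N * S.m * S.P / S.delta)) ^ 2) / S.alpha ^ 2 := by
        rw [initBound_eq]; ring
    _ ≤ 72 * (S.m * S.sigma0 ^ 2 * S.sigman ^ 2 * Real.sqrt S.d ^ 2 * S.logScale) /
        S.alpha ^ 2 := by
        gcongr
        exact h.sqrt_log_init_sq
    _ = 9 / 10 * S.baseCoef *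
        (80 * (S.m * S.sigma0 * S.sigman ^ 3 * Real.sqrt S.d ^ 3 * S.logScale) / S.alpha ^ 2) := by
        rw [baseCoef]; field_simp; ring
    _ ≤ 9 / 10 * S.baseCoef * 1 := by
        have := S.baseCoef_pos
        gcongr
        exact (div_le_one (by positivity)).mpr hkey
    _ = _ := mul_one _

theorem late_cross (h : S.ScaleBounds) :
    8 * S.m / S.alpha ^ 2 * (21 / 20 * (S.crossBound * S.P * S.SU.card)) ^ 2 ≤ S.quadCoef := by
  have hL := h.one_le_logScale
  have hm := S.one_le_m
  have hD := S.sqrt_dim_pos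
  have hσn := S.hsigman
  have hα := S.halpha
  have hl := h.one_le_satScale
  set B := Real.sqrt (Real.log ((16 : ℝ) * S.N ^ 2 * S.P ^ 2 / S.delta)) with hB
  have hkey : 3528 * (S.m * S.sigman ^ 2 * Real.sqrt S.d * S.P ^ 2 * S.SU.card *
      (S.satScale * B) ^ 2) ≤ S.alpha ^ 2 := by
    refine le_trans ?_ h.alpha_sq_lower
    have h1 : (S.P : ℝ) * S.SU.card ≤ 2 * S.logScale :=
      le_trans (by gcongr; exact h.P_le) h.card_SU_le_log
    have h2 : S.satScale * B ≤ 2 * S.logScale := h.satScale_mul_sqrt_log_cross_le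
    calc _ = 3528 * (S.m * S.sigman ^ 2 * Real.sqrt S.d * S.P * (S.P * S.SU.card) *
          (S.satScale * B) ^ 2) := by ring
      _ ≤ 3528 * (S.m * S.sigman ^ 2 * Real.sqrt S.d * S.P * (2 * S.logScale) *
          (2 * S.logScale) ^ 2) := by gcongr
      _ = 28224 * (S.sigman ^ 2 * Real.sqrt S.d * S.m * S.P * (S.logScale ^ 3 * 1)) := by ring
      _ ≤ 10 ^ 20 * (S.sigman ^ 2 * Real.sqrt S.d * S.m * S.P * (S.logScale ^ 3 * S.logScale)) := by
          gcongr
          norm_num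
      _ = _ := by ring
  calc 8 * S.m / S.alpha ^ 2 * (21 / 20 * (S.crossBound * S.P * S.SU.card)) ^ 2
      = S.SU.card * S.sigman ^ 2 * Real.sqrt S.d / (100 * S.satScale ^ 2) *
        (3528 * (S.m * S.sigman ^ 2 * Real.sqrt S.d * S.P ^ 2 * S.SU.card *
          (S.satScale * B) ^ 2) / S.alpha ^ 2) := by
        rw [crossBound_eq, ← hB]; field_simp; ring
    _ ≤ S.SU.card * S.sigman ^ 2 * Real.sqrt S.d / (100 * S.satScale ^ 2) * 1 := by
        gcongr
        exact (div_le_one (by positivity)).mpr hkey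
    _ = S.quadCoef := by rw [mul_one, quadCoef_eq S (by linarith [h.one_le_log_T])]

theorem early_time (h : S.ScaleBounds) (hSL : S.SL.Nonempty) :
    72 / (S.alpha ^ 3 * S.SL.card * S.sigma0) * (3 / 2 * S.initBound) ^ 2 ≤ S.baseCoef / 10 := by
  have hL := h.one_le_logScale
  have hD := S.sqrt_dim_pos
  have hσ := S.hsigma0
  have hσn := S.hsigman
  have hα := S.halpha
  have hn : (0 : ℝ) < S.SL.card := by exact_mod_cast hSL.card_pos
  have hkey : 6480 * (S.sigman ^ 3 * Real.sqrt S.d ^ 3 * S.logScale) ≤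
      S.alpha ^ 3 * S.SL.card := by
    refine le_trans ?_ h.signal_cube
    calc _ ≤ 10 ^ 24 * (S.sigman ^ 3 * Real.sqrt S.d ^ 3 * S.logScale ^ 3) := by
          gcongr
          · norm_num
          · exact le_self_pow₀ hL (by norm_num)
      _ = _ := by ring
  calc 72 / (S.alpha ^ 3 * S.SL.card * S.sigma0) * (3 / 2 * S.initBound) ^ 2
      = 648 / (S.alpha ^ 3 * S.SL.card) * (S.sigma0 * S.sigman ^ 2 * Real.sqrt S.d ^ 2 *
        Real.sqrt (Real.log ((16 : ℝ) * S.N * S.m * S.P / S.delta)) ^ 2) := by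
        rw [initBound_eq]; field_simp; ring
    _ ≤ 648 / (S.alpha ^ 3 * S.SL.card) *
        (S.sigma0 * S.sigman ^ 2 * Real.sqrt S.d ^ 2 * S.logScale) := by
        gcongr
        exact h.sqrt_log_init_sq
    _ = S.baseCoef / 10 * (6480 * (S.sigman ^ 3 * Real.sqrt S.d ^ 3 * S.logScale) /
        (S.alpha ^ 3 * S.SL.card)) := by
        rw [baseCoef]; field_simp; ring
    _ ≤ S.baseCoef / 10 * 1 := by
        have := S.baseCoef_pos
        gcongr
        exact (div_le_one (by positivity)).mpr hkey
    _ = _ := mul_one _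

theorem signal_init (h : S.ScaleBounds) :
    S.m * (S.alpha * (S.sigma0 * Real.sqrt (2 * Real.log ((16 : ℝ) * S.m / S.delta)))) ^ 3 ≤
      1 / 2 := by
  have hL := h.one_le_logScale
  have hm := S.one_le_m
  have hσ := S.hsigma0
  have hα := S.halpha
  have h1 : Real.sqrt (2 * Real.log ((16 : ℝ) * S.m / S.delta)) ≤ 2 * S.logScale := by
    rw [Real.sqrt_le_left (by linarith)]
    nlinarith [h.log_signal_le]
  set q : ℝ := (S.m : ℝ) ^ ((2 : ℝ) / 3) with hq
  have hq0 : 0 < q := by positivity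
  have hq3 : q ^ 3 = (S.m : ℝ) ^ 2 := by
    rw [hq, ← Real.rpow_natCast, ← Real.rpow_mul (by positivity), ← Real.rpow_natCast]
    norm_num
  have h2 : q * (S.alpha * (S.sigma0 * (2 * S.logScale))) ≤ 1 / 2 := by
    have h3 : 10 ^ 8 * (S.sigma0 * (S.alpha * q) * S.logScale) ≤ 1 := h.init_signal
    linarith
  calc _ ≤ S.m * (S.alpha * (S.sigma0 * (2 * S.logScale))) ^ 3 := by gcongr
    _ ≤ (S.m : ℝ) ^ 2 * (S.alpha * (S.sigma0 * (2 * S.logScale))) ^ 3 := by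
        gcongr
        exact le_self_pow₀ hm (by norm_num)
    _ = (q * (S.alpha * (S.sigma0 * (2 * S.logScale)))) ^ 3 := by rw [← hq3, ← mul_pow]
    _ ≤ (1 / 2) ^ 3 := by gcongr
    _ ≤ 1 / 2 := by norm_num

theorem strength_cube (h : S.ScaleBounds) : S.alpha ^ 3 / 2 ≤ (S.alpha - S.eps) ^ 3 := by
  have hα := S.halpha
  have h1 : 9 / 10 * S.alpha ≤ S.alpha - S.eps := by linarith [h.eps_le]
  calc S.alpha ^ 3 / 2 ≤ (9 / 10 * S.alpha) ^ 3 := by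
        rw [mul_pow]
        have : 0 < S.alpha ^ 3 := by positivity
        linarith
    _ ≤ _ := by gcongr

theorem base_le (h : S.ScaleBounds) : S.noiseSq * S.baseCoef ≤ 1 := by
  have hL := h.one_le_logScale
  have hm := S.one_le_m
  have hD := S.sqrt_dim_pos
  have hσ := S.hsigma0
  have hσn := S.hsigman
  have hD1 : 1 ≤ Real.sqrt S.d := by linarith [h.patches_le_sqrt_dim, h.two_le_P]
  have h0 : 0 ≤ S.sigma0 * S.sigman * S.m ^ 2 * S.d * S.logScale := by positivity
  calc S.noiseSq * S.baseCoef = S.sigma0 * S.sigman * 1 ^ 2 * Real.sqrt S.d ^ 1 * 1 := by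
        rw [noiseSq_eq, baseCoef]; field_simp
    _ ≤ S.sigma0 * S.sigman * S.m ^ 2 * Real.sqrt S.d ^ 2 * S.logScale := by
        gcongr
        norm_num
    _ ≤ 1 := by rw [sqrt_dim_sq]; linarith [h.init_noise]

theorem paramBounds (h : S.ScaleBounds) : S.ParamBounds where
  two_le_T := h.two_le_T
  one_le_satScale := h.one_le_satScale
  satScale_pow := h.satScale_pow
  quadCoef_nonneg := by
    rw [quadCoef_eq S (by linarith [h.one_le_log_T])]
    positivity
  absorb _ := h.absorb
  corr_cube := h.corr_cube
  noise_step := by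
    have hη := S.heta
    have hn := S.noiseSq_pos
    have hL := h.one_le_logScale
    have h1 : 10 ^ 8 * (S.eta * S.noiseSq * S.logScale) ≤ 1 := h.rate_noise
    have h2 : S.eta * S.noiseSq * S.satScale ≤ S.eta * S.noiseSq * S.logScale := by
      gcongr
      exact h.satScale_le
    have h3 : 0 ≤ S.eta * S.noiseSq * S.logScale := by positivity
    linarith
  late_init := h.late_init
  late_cross := h.late_cross
  early_time := h.early_time
  signal_step := by
    have hη := S.heta
    have h1 : S.eta * S.alpha ^ 2 * 1 ≤ S.eta * S.alpha ^ 2 * S.logScale := by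
      gcongr
      exact h.one_le_logScale
    have h2 : 0 ≤ S.eta * S.alpha ^ 2 := by positivity
    linarith [h.rate_signal]
  signal_init := h.signal_init
  strength_cube := h.strength_cube
  base_le := h.base_le

end ScaleBounds

end Setting

/-- Verification of noise stability on learnable samples. On the
event `E`, under Condition (H), at any iteration `t ≤ T+1` the learnable noise
coefficients are controlled in terms of the maximal unlearnable noise coefficient,
and consequently the noise-stability bound (NS) holds at `t`. -/
theorem stmt9 :
    ∃ C : ℝ, 0 < C ∧
      ∀ S : Setting, S.ATDyn → S.EventE → S.CondH C → (S.SU.Nonempty → S.SparseRegime C) →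
        ∀ t, t ≤ S.T + 1 →
          (∀ r : Fin S.m, ∀ i ∈ S.SL, ∀ j, j ≠ S.sig i →
            S.rho i j r t ≤
              S.sigma0 / (S.sigman * Real.sqrt S.d) +
                S.pun * S.N * S.sigman ^ 2 * Real.sqrt S.d /
                    (100 * Real.log S.T ^ ((2 : ℝ) / 3)) *
                  (S.rhoMaxSU t) ^ 2) ∧
          S.NS t := by
  refine ⟨10 ^ 8, by norm_num, fun S hdyn hE hH hsparse t ht => ?_⟩
  have hbounds : ∀ r : Fin S.m, ∀ i ∈ S.SL, ∀ j, j ≠ S.sig i →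
      S.rho i j r t ≤ S.baseCoef + S.quadCoef * S.rhoMaxSU t ^ 2 ∧
        |dot (S.w t r) (S.x i j)| ≤ S.corrBound S.coefCap := fun r i hi j hj =>
    Setting.noise_stability hdyn hE
      (Setting.scaleBounds_of_condH hH hsparse ⟨i, hi⟩).paramBounds ht r hi hj
  refine ⟨fun r i hi j hj => (hbounds r i hi j hj).1, fun r i hi j hj => ?_⟩
  refine (hbounds r i hi j hj).2.trans_eq ?_
  rw [Setting.corrBound_coefCap, Setting.satScale, Real.sqrt_mul (Nat.cast_nonneg _)]
  ring

end AD

end
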